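/- arXiv:0704.1607 — 3 statements merged into one kernel-verified Lean document; each statement's English description precedes it below -/
import Mathlib

section
/- Let ψ : ℝ → ℂ be 2π-periodic with ψ restricted to I = [0,2π) integrable (ψ|_I ∈ L¹(I)). Then ψ satisfies ψ(x) + ψ(h(x,z)) − ψ(z) − ψ(x − z + h(x,z)) = 0 for almost every (x,z) ∈ ℝ² if and only if there exist constants c₁, c₂ ∈ ℂ such that ψ(x) = c₁ + c₂ |sin(x/2)| for almost every x ∈ ℝ. (That is, the only locally integrable collisional invariants are the trivial ones.) -/
open MeasureTheory Real Set Filter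
open scoped Topology ENNReal ComplexConjugate

noncomputable section

/-- The fundamental periodic cell `I = [0, 2π)`. -/
def II : Set ℝ := Set.Ico 0 (2 * π)

/-- Lebesgue measure restricted to `I`. -/
def muI : Measure ℝ := volume.restrict II

/-- The dispersion relation `ω(x) = |sin(x/2)|`. -/
def omg (x : ℝ) : ℝ := |Real.sin (x / 2)|

/-- `Ω(x,y,z) = ω(x) + ω(y) − ω(z) − ω(x+y−z)`. -/
def Omg (x y z : ℝ) : ℝ := omg x + omg y - omg z - omg (x + y - z)

/-- The representative of `x` modulo `2π` lying in `[0, 2π)`. -/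
def mod2pi (x : ℝ) : ℝ := x - 2 * π * (⌊x / (2 * π)⌋ : ℝ)

/-- `h` on the fundamental cell: `h(x,z) = (z−x)/2 + 2 arcsin( tan(|z−x|/4) cos((x+z)/4) )`. -/
def h0 (x z : ℝ) : ℝ :=
  (z - x) / 2 + 2 * Real.arcsin (Real.tan (|z - x| / 4) * Real.cos ((x + z) / 4))

/-- The extension of `h` to all of `ℝ²`: `h(x,z) = h(x mod 2π, z mod 2π) − (x − (x mod 2π))`. -/
def hFPU (x z : ℝ) : ℝ := h0 (mod2pi x) (mod2pi z) - (x - mod2pi x)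

/-- `F₊(x,y) = (cos(x/2)+cos(y/2))² + 4 sin(x/2) sin(y/2)`. -/
def Fp (x y : ℝ) : ℝ :=
  (Real.cos (x / 2) + Real.cos (y / 2)) ^ 2 + 4 * Real.sin (x / 2) * Real.sin (y / 2)

/-- `F₋(x,y) = (cos(x/2)+cos(y/2))² − 4 sin(x/2) sin(y/2)`. -/
def Fm (x y : ℝ) : ℝ :=
  (Real.cos (x / 2) + Real.cos (y / 2)) ^ 2 - 4 * Real.sin (x / 2) * Real.sin (y / 2)

/-- The kernel `K₁(x,y) = 4·𝟙(F₋(x,y) > 0)/√(F₋(x,y))`. -/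
def K1 (x y : ℝ) : ℝ := if 0 < Fm x y then 4 / Real.sqrt (Fm x y) else 0

/-- The kernel `K₂(x,y) = 2/√(F₊(x,y))`. -/
def K2 (x y : ℝ) : ℝ := 2 / Real.sqrt (Fp x y)

/-- `V(x) = ∫_I K₂(x,y) dy`. -/
def VV (x : ℝ) : ℝ := ∫ y in II, K2 x y

/-- `W(x) = sin²(x/2)·V(x)`. -/
def WW (x : ℝ) : ℝ := Real.sin (x / 2) ^ 2 * VV x

def thF (u v : ℝ) : ℝ := Real.arcsin (Real.tan ((v - u) / 2) * Real.cos ((u + v) / 2))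
def yF (u v : ℝ) : ℝ := (v - u) / 2 + thF u v
def wF (u v : ℝ) : ℝ := π - (v - u) / 2 + thF u v

lemma abs_tan_mul_cos_lt {u v : ℝ} (hu : 0 < u) (huv : u < v) (hv : v < π) :
    |Real.tan ((v - u) / 2) * Real.cos ((u + v) / 2)| < Real.sin ((v - u) / 2) := by
  have hd0 : 0 < (v - u) / 2 := by linarith
  have hd1 : (v - u) / 2 < π / 2 := by linarith
  have hc : 0 < Real.cos ((v - u) / 2) := Real.cos_pos_of_mem_Ioo ⟨by linarith, hd1⟩
  have hs : 0 < Real.sin ((v - u) / 2) := Real.sin_pos_of_pos_of_lt_pi hd0 (by linarith)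
  have h1 : |Real.cos ((u + v) / 2)| < Real.cos ((v - u) / 2) := by
    rw [abs_lt]
    constructor
    · rw [← Real.cos_pi_sub]
      exact Real.cos_lt_cos_of_nonneg_of_le_pi (by linarith) (by linarith) (by linarith)
    · exact Real.cos_lt_cos_of_nonneg_of_le_pi (by linarith) (by linarith) (by linarith)
  rw [abs_mul, Real.tan_eq_sin_div_cos, abs_div, abs_of_pos hs, abs_of_pos hc, div_mul_eq_mul_div,
    div_lt_iff₀ hc]
  exact mul_lt_mul_of_pos_left h1 hs

lemma abs_tan_mul_cos_lt_one {u v : ℝ} (hu : 0 < u) (huv : u < v) (hv : v < π) :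
    |Real.tan ((v - u) / 2) * Real.cos ((u + v) / 2)| < 1 :=
  (abs_tan_mul_cos_lt hu huv hv).trans_le (Real.sin_le_one _)

lemma abs_thF_lt {u v : ℝ} (hu : 0 < u) (huv : u < v) (hv : v < π) :
    |thF u v| < (v - u) / 2 := by
  have h := abs_lt.1 (abs_tan_mul_cos_lt hu huv hv)
  have hs : Real.sin ((v - u) / 2) ≤ 1 := Real.sin_le_one _
  have e : Real.arcsin (Real.sin ((v - u) / 2)) = (v - u) / 2 :=
    Real.arcsin_sin (by linarith) (by linarith)
  unfold thF
  rw [abs_lt]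
  constructor
  · rw [← e, ← Real.arcsin_neg]
    rw [e]
    exact Real.strictMonoOn_arcsin ⟨by linarith, by linarith⟩ ⟨by linarith, by linarith⟩ h.1
  · conv_rhs => rw [← e]
    exact Real.strictMonoOn_arcsin ⟨by linarith, by linarith⟩ ⟨by linarith, by linarith⟩ h.2

lemma yF_mem {u v : ℝ} (hu : 0 < u) (huv : u < v) (hv : v < π) : yF u v ∈ Ioo 0 π := by
  have h := abs_lt.1 (abs_thF_lt hu huv hv)
  unfold yF; constructor <;> linarith [h.1, h.2]

lemma wF_mem {u v : ℝ} (hu : 0 < u) (huv : u < v) (hv : v < π) : wF u v ∈ Ioo 0 π := by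
  have h := abs_lt.1 (abs_thF_lt hu huv hv)
  unfold wF; constructor <;> linarith [h.1, h.2]

lemma sum_rel (u v : ℝ) : u + yF u v + π = v + wF u v := by unfold yF wF; ring

lemma sin_rel_iff (u v θ : ℝ) :
    Real.sin u + Real.sin ((v - u) / 2 + θ) = Real.sin v + Real.sin (π - (v - u) / 2 + θ) ↔
      Real.sin θ * Real.cos ((v - u) / 2) = Real.sin ((v - u) / 2) * Real.cos ((u + v) / 2) := by
  have e1 : Real.sin u = Real.sin ((u + v) / 2 - (v - u) / 2) := by congr 1; ring
  have e2 : Real.sin v = Real.sin ((u + v) / 2 + (v - u) / 2) := by congr 1; ring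
  have e3 : Real.sin (π - (v - u) / 2 + θ) = Real.sin ((v - u) / 2 - θ) := by
    rw [← Real.sin_pi_sub]; congr 1; ring
  rw [e1, e2, e3, Real.sin_sub, Real.sin_add, Real.sin_add, Real.sin_sub]
  constructor <;> intro h <;> linarith

lemma sin_rel {u v : ℝ} (hu : 0 < u) (huv : u < v) (hv : v < π) :
    Real.sin u + Real.sin (yF u v) = Real.sin v + Real.sin (wF u v) := by
  unfold yF wF
  rw [sin_rel_iff]
  have h := abs_lt.1 (abs_tan_mul_cos_lt_one hu huv hv)
  have hc : 0 < Real.cos ((v - u) / 2) := Real.cos_pos_of_mem_Ioo ⟨by linarith, by linarith⟩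
  unfold thF
  rw [Real.sin_arcsin h.1.le h.2.le, Real.tan_eq_sin_div_cos]
  field_simp

lemma rel_unique {u v y w : ℝ} (hu : 0 < u) (huv : u < v) (hv : v < π) (hy : y ∈ Ioo 0 π)
    (hw : w ∈ Ioo 0 π) (h1 : u + y + π = v + w)
    (h2 : Real.sin u + Real.sin y = Real.sin v + Real.sin w) : yF u v = y ∧ wF u v = w := by
  obtain ⟨hy0, hy1⟩ := hy
  obtain ⟨hw0, hw1⟩ := hw
  obtain ⟨θ, hθ⟩ : ∃ θ, θ = y - (v - u) / 2 := ⟨_, rfl⟩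
  have ey : y = (v - u) / 2 + θ := by linarith
  have ew : w = π - (v - u) / 2 + θ := by linarith
  rw [ey, ew, sin_rel_iff] at h2
  have hc : 0 < Real.cos ((v - u) / 2) := Real.cos_pos_of_mem_Ioo ⟨by linarith, by linarith⟩
  have : thF u v = θ := by
    unfold thF
    have : Real.tan ((v - u) / 2) * Real.cos ((u + v) / 2) = Real.sin θ := by
      rw [Real.tan_eq_sin_div_cos]; field_simp; linarith
    rw [this, Real.arcsin_sin (by linarith) (by linarith)]
  unfold yF wF
  rw [this, ← ey, ← ew]; simp

lemma lt_wF {u v : ℝ} (hu : 0 < u) (huv : u < v) (hv : v < π) : u < wF u v := by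
  have := sum_rel u v
  have := (yF_mem hu huv hv).1
  linarith

lemma yF_lt {u v : ℝ} (hu : 0 < u) (huv : u < v) (hv : v < π) : yF u v < v := by
  have := sum_rel u v
  have := (wF_mem hu huv hv).2
  linarith

lemma wF_invol {u v : ℝ} (hu : 0 < u) (huv : u < v) (hv : v < π) : wF u (wF u v) = v :=
  (rel_unique hu (lt_wF hu huv hv) (wF_mem hu huv hv).2 (yF_mem hu huv hv)
    ⟨by linarith, hv⟩ (by linarith [sum_rel u v]) (by linarith [sin_rel hu huv hv])).2

lemma yF_invol {u v : ℝ} (hu : 0 < u) (huv : u < v) (hv : v < π) : yF (yF u v) v = u :=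
  (rel_unique (yF_mem hu huv hv).1 (yF_lt hu huv hv) hv ⟨hu, by linarith⟩
    (wF_mem hu huv hv) (by linarith [sum_rel u v]) (by linarith [sin_rel hu huv hv])).1

lemma contDiffAt_thF {u v : ℝ} (hc : Real.cos ((v - u) / 2) ≠ 0)
    (h : |Real.tan ((v - u) / 2) * Real.cos ((u + v) / 2)| < 1) :
    ContDiffAt ℝ 2 (fun p : ℝ × ℝ => thF p.1 p.2) (u, v) := by
  have h' := abs_lt.1 h
  unfold thF
  refine ContDiffAt.comp (u, v) (g := Real.arcsin)
    (f := fun p : ℝ × ℝ => Real.tan ((p.2 - p.1) / 2) * Real.cos ((p.1 + p.2) / 2))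
    (Real.contDiffAt_arcsin h'.1.ne' h'.2.ne) ?_
  refine ContDiffAt.mul ?_ ?_
  · exact ContDiffAt.comp (u, v) (g := Real.tan) (f := fun p : ℝ × ℝ => (p.2 - p.1) / 2)
      (Real.contDiffAt_tan.2 hc) (by fun_prop)
  · fun_prop

lemma contDiffAt_thF' {u v : ℝ} (hu : 0 < u) (huv : u < v) (hv : v < π) :
    ContDiffAt ℝ 2 (fun p : ℝ × ℝ => thF p.1 p.2) (u, v) :=
  contDiffAt_thF (Real.cos_pos_of_mem_Ioo ⟨by linarith, by linarith⟩).ne'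
    (abs_tan_mul_cos_lt_one hu huv hv)

lemma contDiffAt_yF {u v : ℝ} (h : ContDiffAt ℝ 2 (fun p : ℝ × ℝ => thF p.1 p.2) (u, v)) :
    ContDiffAt ℝ 2 (fun p : ℝ × ℝ => yF p.1 p.2) (u, v) := by
  unfold yF; exact ContDiffAt.add (by fun_prop) h

lemma contDiffAt_wF {u v : ℝ} (h : ContDiffAt ℝ 2 (fun p : ℝ × ℝ => thF p.1 p.2) (u, v)) :
    ContDiffAt ℝ 2 (fun p : ℝ × ℝ => wF p.1 p.2) (u, v) := by
  unfold wF; exact ContDiffAt.add (by fun_prop) h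
lemma contDiffOn_kernel_integral {k : ℝ × ℝ → ℝ} {s : Set ℝ} {K : Set ℝ} (hs : IsOpen s)
    (hK : IsCompact K) (h0 : ∀ u y, u ∈ s → y ∉ K → k (u, y) = 0)
    (hk : ContDiffOn ℝ 1 k (s ×ˢ univ)) {f : ℝ → ℂ} (hf : Integrable f) :
    ContDiffOn ℝ 1 (fun u => ∫ y, k (u, y) • f y) s := by
  have h := contDiffOn_convolution_right_with_param (𝕜 := ℝ) (μ := volume) (n := 1) (f := f)
    (ContinuousLinearMap.lsmul ℝ ℝ : ℝ →L[ℝ] ℂ →L[ℝ] ℂ).flip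
    (g := fun u y => k (u, -y)) hs (k := Neg.neg ⁻¹' K)
    (by simpa using hK.neg) (fun p x hp hx => h0 p (-x) hp (by simpa using hx)) hf.locallyIntegrable
    (by
      have : (↿(fun u y => k (u, -y)) : ℝ × ℝ → ℝ) = k ∘ (fun q : ℝ × ℝ => (q.1, -q.2)) := by
        ext q; rfl
      rw [this]
      refine hk.comp (ContDiff.contDiffOn (by fun_prop)) ?_
      rintro ⟨a, b⟩ h
      simpa using h)
  have h2 := h.comp (f := fun u : ℝ => (u, (0:ℝ))) (s := s) (ContDiff.contDiffOn (by fun_prop))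
    (fun u hu => by simpa using hu)
  refine h2.congr fun u hu => ?_
  simp [convolution]

lemma smooth_param {Φ : ℝ × ℝ → ℝ} {u0 v0 c : ℝ} (hΦ : ContDiffAt ℝ 2 Φ (u0, v0))
    (hd : HasDerivAt (fun v => Φ (u0, v)) c v0) (hc : c ≠ 0) {f : ℝ → ℂ} (hf : Integrable f) :
    ∃ ε₀ > 0, ∀ ε > 0, ε ≤ ε₀ → ∀ χ : ℝ → ℝ, ContDiff ℝ 1 χ →
      (∀ v, v ∉ Metric.closedBall v0 ε → χ v = 0) →
      (∀ u ∈ Metric.ball u0 ε, Integrable (fun v => χ v • f (Φ (u, v)))) ∧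
      ContDiffOn ℝ 1 (fun u => ∫ v, χ v • f (Φ (u, v))) (Metric.ball u0 ε) := by
  classical
  set L := fderiv ℝ Φ (u0, v0) with hL
  have hΦd : HasFDerivAt Φ L (u0, v0) := (hΦ.differentiableAt (by simp)).hasFDerivAt
  have hLc : L (0, 1) = c := by
    have h1 : HasDerivAt (fun v : ℝ => (u0, v)) ((0:ℝ), (1:ℝ)) v0 :=
      (hasDerivAt_const v0 u0).prodMk (hasDerivAt_id v0)
    exact (hΦd.comp_hasDerivAt v0 h1).unique hd
  have hLab : ∀ a b, L (a, b) = L (a, 0) + b * c := by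
    intro a b
    have : ((a, b) : ℝ × ℝ) = (a, 0) + b • ((0:ℝ), (1:ℝ)) := by simp
    rw [this, map_add, map_smul, hLc]; simp
  let A : (ℝ × ℝ) ≃L[ℝ] (ℝ × ℝ) := ContinuousLinearEquiv.equivOfInverse
    ((ContinuousLinearMap.fst ℝ ℝ ℝ).prod L)
    ((ContinuousLinearMap.fst ℝ ℝ ℝ).prod
      (c⁻¹ • (ContinuousLinearMap.snd ℝ ℝ ℝ - L.comp
        ((ContinuousLinearMap.fst ℝ ℝ ℝ).prod 0))))
    (by rintro ⟨a, b⟩; simp [hLab a b]; field_simp)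
    (by rintro ⟨a, b⟩; simp [hLab a (_ * _)]; field_simp; ring)
  let E : ℝ × ℝ → ℝ × ℝ := fun p => (p.1, Φ p)
  have hE : ContDiffAt ℝ 2 E (u0, v0) := contDiffAt_fst.prodMk hΦ
  have hE' : HasFDerivAt E (A : (ℝ × ℝ) →L[ℝ] (ℝ × ℝ)) (u0, v0) := hasFDerivAt_fst.prodMk hΦd
  let e := hE.toOpenPartialHomeomorph E hE' (by norm_num)
  have he : ∀ p, e p = (p.1, Φ p) := fun p => rfl
  have hmem : (u0, v0) ∈ e.source := hE.mem_toOpenPartialHomeomorph_source hE' (by norm_num)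
  have hmem' : e (u0, v0) ∈ e.target := e.map_source hmem
  have hsymm : ContDiffAt ℝ 2 e.symm (e (u0, v0)) :=
    e.contDiffAt_symm hmem' (by rw [e.left_inv hmem]; exact hE')
      (by rw [e.left_inv hmem]; exact hE)
  have hsymm' : HasFDerivAt e.symm (A.symm : (ℝ × ℝ) →L[ℝ] (ℝ × ℝ)) (e (u0, v0)) :=
    e.hasFDerivAt_symm hmem' (by rw [e.left_inv hmem]; exact hE')
  let D : ℝ × ℝ → ℝ := fun q => (fderiv ℝ e.symm q (0, 1)).2
  have hD : ∀ q, ContDiffAt ℝ 2 e.symm q → ContDiffAt ℝ 1 D q := by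
    intro q hq
    have : ContDiffAt ℝ 1 (fderiv ℝ e.symm) q := hq.fderiv_right (by norm_num)
    exact contDiffAt_snd.comp q (this.clm_apply contDiffAt_const)
  have hD0 : D (e (u0, v0)) ≠ 0 := by
    have : D (e (u0, v0)) = (A.symm (0, 1)).2 := by
      simp only [D]; rw [hsymm'.fderiv]; rfl
    rw [this]
    have : A.symm (0, 1) = (0, c⁻¹) := by
      rw [ContinuousLinearEquiv.symm_apply_eq]
      change _ = ((0:ℝ), L (0, c⁻¹))
      rw [hLab]
      have : L (0, 0) = 0 := map_zero L
      rw [this]; field_simp; simp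
    rw [this]; simpa using hc
  have hG : ∀ᶠ q in 𝓝 (e (u0, v0)), q ∈ e.target ∧ ContDiffAt ℝ 2 e.symm q ∧ D q ≠ 0 :=
    Eventually.and (e.open_target.mem_nhds hmem') ((hsymm.eventually (by simp)).and
      ((hD _ hsymm).continuousAt.eventually_ne hD0))
  obtain ⟨T, hTsub, hTo, hTm⟩ := eventually_nhds_iff.1 hG
  have hS : e.source ∩ e ⁻¹' T ∈ 𝓝 (u0, v0) :=
    inter_mem (e.open_source.mem_nhds hmem) (e.continuousAt hmem (hTo.mem_nhds hTm))
  obtain ⟨ε₀, hε₀, hball⟩ := Metric.nhds_basis_closedBall.mem_iff.1 hS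
  refine ⟨ε₀, hε₀, fun ε hε hεε χ hχ hχ0 => ?_⟩
  replace hball : Metric.closedBall (u0, v0) ε ⊆ e.source ∩ e ⁻¹' T :=
    (Metric.closedBall_subset_closedBall hεε).trans hball
  have hboxmem : ∀ u ∈ Metric.ball u0 ε, ∀ v ∈ Metric.closedBall v0 ε,
      (u, v) ∈ Metric.closedBall (u0, v0) ε := by
    intro u hu v hv
    rw [← closedBall_prod_same]
    exact ⟨Metric.ball_subset_closedBall hu, hv⟩
  let K := e '' Metric.closedBall (u0, v0) ε
  have hKc : IsCompact K :=
    (isCompact_closedBall _ _).image_of_continuousOn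
      (e.continuousOn.mono (hball.trans inter_subset_left))
  let k : ℝ × ℝ → ℝ := T.indicator (fun q => |D q| * χ (e.symm q).2)
  have hfst : ∀ q ∈ T, (e.symm q).1 = q.1 := by
    intro q hq
    have := e.right_inv (hTsub q hq).1
    rw [he] at this
    exact (Prod.ext_iff.1 this).1
  have hsnd : ∀ q ∈ T, Φ (e.symm q) = q.2 := by
    intro q hq
    have := e.right_inv (hTsub q hq).1
    rw [he] at this
    exact (Prod.ext_iff.1 this).2
  have hkK : ∀ q : ℝ × ℝ, q.1 ∈ Metric.ball u0 ε → q ∉ K → k q = 0 := by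
    intro q hq hqK
    by_cases hqT : q ∈ T
    · simp only [k, indicator_of_mem hqT]
      rw [hχ0, mul_zero]
      intro hv
      apply hqK
      refine ⟨e.symm q, ?_, e.right_inv (hTsub q hqT).1⟩
      have := hboxmem q.1 hq _ hv
      rwa [← hfst q hqT] at this
    · simp [k, hqT]
  have hkc : ContDiffOn ℝ 1 k (Metric.ball u0 ε ×ˢ univ) := by
    intro q hq
    apply ContDiffAt.contDiffWithinAt
    by_cases hqT : q ∈ T
    · have h1 : ContDiffAt ℝ 1 (fun q => |D q| * χ (e.symm q).2) q := by
        refine ContDiffAt.mul ?_ ?_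
        · exact (contDiffAt_abs (hTsub q hqT).2.2).comp q (hD q (hTsub q hqT).2.1)
        · exact hχ.contDiffAt.comp q (contDiffAt_snd.comp q
            ((hTsub q hqT).2.1.of_le (by norm_num)))
      refine h1.congr_of_eventuallyEq ?_
      filter_upwards [hTo.mem_nhds hqT] with q' hq'
      simp [k, hq']
    · have hqK : q ∉ K := by
        rintro ⟨p, hp, rfl⟩
        exact hqT (hball hp).2
      refine (contDiffAt_const (c := (0:ℝ))).congr_of_eventuallyEq ?_
      filter_upwards [hKc.isClosed.isOpen_compl.mem_nhds hqK,
        (Metric.isOpen_ball.prod isOpen_univ).mem_nhds hq] with q' h1 h2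
      exact hkK q' h2.1 h1
  have hk0 : ∀ u y, u ∈ Metric.ball u0 ε → y ∉ Prod.snd '' K → k (u, y) = 0 := by
    intro u y hu hy
    exact hkK _ hu (fun h => hy ⟨_, h, rfl⟩)
  have hsndK : IsCompact (Prod.snd '' K) := hKc.image continuous_snd
  have hsm := contDiffOn_kernel_integral Metric.isOpen_ball hsndK hk0 hkc hf
  have key : ∀ u ∈ Metric.ball u0 ε, Integrable (fun v => χ v • f (Φ (u, v))) ∧
      ∫ v, χ v • f (Φ (u, v)) = ∫ y, k (u, y) • f y := by
    intro u hu
    let Tu : Set ℝ := {y | (u, y) ∈ T}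
    have hTu : MeasurableSet Tu := (hTo.preimage (by fun_prop : Continuous fun y : ℝ => (u, y))).measurableSet
    let m : ℝ → ℝ := fun y => (e.symm (u, y)).2
    have hpair : ∀ y ∈ Tu, e.symm (u, y) = (u, m y) := by
      intro y hy
      exact Prod.ext (hfst _ hy) rfl
    have hΦm : ∀ y ∈ Tu, Φ (u, m y) = y := by
      intro y hy
      rw [← hpair y hy]; exact hsnd _ hy
    have hm : ∀ y ∈ Tu, HasDerivWithinAt m (D (u, y)) Tu y := by
      intro y hy
      have h1 : HasDerivAt (fun v : ℝ => (u, v)) ((0:ℝ), (1:ℝ)) y :=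
        (hasDerivAt_const y u).prodMk (hasDerivAt_id y)
      have h2 : HasFDerivAt e.symm (fderiv ℝ e.symm (u, y)) (u, y) :=
        ((hTsub _ hy).2.1.differentiableAt (by simp)).hasFDerivAt
      exact ((ContinuousLinearMap.snd ℝ ℝ ℝ).hasFDerivAt.comp_hasDerivAt y
        (h2.comp_hasDerivAt y h1)).hasDerivWithinAt
    have hinj : InjOn m Tu := by
      intro y hy y' hy' h
      rw [← hΦm y hy, ← hΦm y' hy', h]
    let g : ℝ → ℂ := fun v => χ v • f (Φ (u, v))
    have hg0 : ∀ v, v ∉ m '' Tu → g v = 0 := by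
      intro v hv
      have : χ v = 0 := by
        apply hχ0
        intro hv'
        apply hv
        have h1 := hball (hboxmem u hu v hv')
        refine ⟨Φ (u, v), h1.2, ?_⟩
        have := e.left_inv h1.1
        rw [he] at this
        simp only [m]
        rw [this]
      simp [g, this]
    have hcongr : ∀ y, Tu.indicator (fun y => |D (u, y)| • g (m y)) y = k (u, y) • f y := by
      intro y
      by_cases hy : y ∈ Tu
      · have hy' : (u, y) ∈ T := hy
        simp only [indicator_of_mem hy, k, indicator_of_mem hy', g]
        rw [hΦm y hy, mul_smul]
      · have hy' : (u, y) ∉ T := hy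
        simp [hy, hy', k]
    have hki : Integrable (fun y => k (u, y) • f y) := by
      apply hf.locallyIntegrable.integrable_smul_left_of_hasCompactSupport
      · rw [← continuousOn_univ]
        exact hkc.continuousOn.comp (by fun_prop) (fun y _ => ⟨hu, trivial⟩)
      · exact HasCompactSupport.intro hsndK (fun y hy => hk0 u y hu hy)
    have hI1 : IntegrableOn (fun y => |D (u, y)| • g (m y)) Tu := by
      rw [← integrable_indicator_iff hTu]
      exact hki.congr (Eventually.of_forall fun y => (hcongr y).symm)
    have hI2 : IntegrableOn g (m '' Tu) :=
      (integrableOn_image_iff_integrableOn_abs_deriv_smul hTu hm hinj g).2 hI1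
    constructor
    · refine (integrableOn_iff_integrable_of_support_subset ?_).1 hI2
      intro v hv
      by_contra h
      exact hv (hg0 v h)
    · calc ∫ v, g v = ∫ v in m '' Tu, g v :=
            (setIntegral_eq_integral_of_forall_compl_eq_zero hg0).symm
        _ = ∫ y in Tu, |D (u, y)| • g (m y) :=
            integral_image_eq_integral_abs_deriv_smul hTu hm hinj g
        _ = ∫ y, Tu.indicator (fun y => |D (u, y)| • g (m y)) y := (integral_indicator hTu).symm
        _ = _ := by congr 1; ext y; exact hcongr y
  exact ⟨fun u hu => (key u hu).1, hsm.congr fun u hu => (key u hu).2⟩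

lemma hasDerivAt_yF_diag {u : ℝ} : HasDerivAt (fun v => yF u v) ((1 + Real.cos u) / 2) u := by
  have h1 : HasDerivAt (fun v : ℝ => (v - u) / 2) (1 / 2) u :=
    ((hasDerivAt_id u).sub_const u).div_const 2
  have h2 : HasDerivAt (fun v : ℝ => (u + v) / 2) (1 / 2) u :=
    ((hasDerivAt_id u).const_add u).div_const 2
  have h3 : HasDerivAt (fun v : ℝ => Real.tan ((v - u) / 2)) (1 / Real.cos ((u - u) / 2) ^ 2 * (1 / 2)) u :=
    (Real.hasDerivAt_tan (by simp)).comp u h1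
  have h4 := h3.mul h2.cos
  have h5 := HasDerivAt.comp (h₂ := Real.arcsin) u (Real.hasDerivAt_arcsin
    (x := Real.tan ((u - u) / 2) * Real.cos ((u + u) / 2)) (by simp) (by simp)) h4
  have h6 := h1.add h5
  refine (h6.congr_deriv ?_)
  simp
  ring

lemma exists_good_v {u : ℝ} (hu : u ∈ Ioo 0 π) : ∃ v c, u < v ∧ v < π ∧
    HasDerivAt (fun v => yF u v) c v ∧ c ≠ 0 ∧ c ≠ 1 := by
  have hth : ContDiffAt ℝ 2 (fun p : ℝ × ℝ => thF p.1 p.2) (u, u) :=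
    contDiffAt_thF (by simp) (by simp)
  have hy := contDiffAt_yF hth
  have hfd : ContDiffAt ℝ 1 (fderiv ℝ (fun p : ℝ × ℝ => yF p.1 p.2)) (u, u) :=
    hy.fderiv_right (by norm_num)
  let d : ℝ → ℝ := fun v => fderiv ℝ (fun p : ℝ × ℝ => yF p.1 p.2) (u, v) (0, 1)
  have hderiv : ∀ v, ContDiffAt ℝ 2 (fun p : ℝ × ℝ => yF p.1 p.2) (u, v) →
      HasDerivAt (fun v => yF u v) (d v) v := by
    intro v hv
    have h1 : HasDerivAt (fun v : ℝ => (u, v)) ((0:ℝ), (1:ℝ)) v :=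
      (hasDerivAt_const v u).prodMk (hasDerivAt_id v)
    exact (hv.differentiableAt (by simp)).hasFDerivAt.comp_hasDerivAt v h1
  have hdu : d u = (1 + Real.cos u) / 2 := (hderiv u hy).unique hasDerivAt_yF_diag
  have hdc : ContinuousAt d u := by
    have h1 : ContinuousAt (fun v : ℝ => fderiv ℝ (fun p : ℝ × ℝ => yF p.1 p.2) (u, v)) u :=
      ContinuousAt.comp (f := fun v : ℝ => (u, v)) hfd.continuousAt (by fun_prop)
    exact h1.clm_apply continuousAt_const
  have hcos1 : Real.cos u < 1 := by
    rw [← Real.cos_zero]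
    exact Real.cos_lt_cos_of_nonneg_of_le_pi le_rfl hu.2.le hu.1
  have hcos2 : -1 < Real.cos u := by
    rw [← Real.cos_pi]
    exact Real.cos_lt_cos_of_nonneg_of_le_pi hu.1.le le_rfl hu.2
  have e0 : ∀ᶠ v in 𝓝[>] u, d v ≠ 0 :=
    (hdc.eventually_ne (by rw [hdu]; linarith)).filter_mono nhdsWithin_le_nhds
  have e1 : ∀ᶠ v in 𝓝[>] u, d v ≠ 1 :=
    (hdc.eventually_ne (by rw [hdu]; linarith)).filter_mono nhdsWithin_le_nhds
  have e2 : ∀ᶠ v in 𝓝[>] u, v < π := (eventually_lt_nhds hu.2).filter_mono nhdsWithin_le_nhds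
  have e3 : ∀ᶠ v in 𝓝[>] u, u < v := eventually_mem_nhdsWithin
  obtain ⟨v, h0, h1, h2, h3⟩ := (e0.and (e1.and (e2.and e3))).exists
  exact ⟨v, d v, h3, h2, hderiv v (contDiffAt_yF (contDiffAt_thF' hu.1 h3 h2)), h0, h1⟩

def RelAE (f : ℝ → ℂ) : Prop :=
  ∀ᵐ p : ℝ × ℝ, 0 < p.1 → p.1 < p.2 → p.2 < π →
    f p.1 + f (yF p.1 p.2) - f p.2 - f (wF p.1 p.2) = 0

lemma local_C1 {f : ℝ → ℂ} (hf : Integrable f) (hrel : RelAE f) {u0 : ℝ} (hu0 : u0 ∈ Ioo 0 π) :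
    ∃ ε > 0, ∃ F : ℝ → ℂ, ContDiffOn ℝ 1 F (Metric.ball u0 ε) ∧
      ∀ᵐ u, u ∈ Metric.ball u0 ε → f u = F u := by
  obtain ⟨v0, c, huv, hv, hd, hc0, hc1⟩ := exists_good_v hu0
  have hth := contDiffAt_thF' hu0.1 huv hv
  have hdw : HasDerivAt (fun v => wF u0 v) (c - 1) v0 := by
    have e : (fun v => wF u0 v) = fun v => yF u0 v - v + (u0 + π) := by
      ext v; linarith [sum_rel u0 v]
    rw [e]
    exact (hd.sub (hasDerivAt_id v0)).add_const _
  obtain ⟨ε1, hε1, H1⟩ := smooth_param (contDiffAt_yF hth) hd hc0 hf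
  obtain ⟨ε2, hε2, H2⟩ := smooth_param (contDiffAt_wF hth) hdw (sub_ne_zero.2 hc1) hf
  obtain ⟨ε, hε, hle⟩ : ∃ ε > 0, ε ≤ ε1 ∧ ε ≤ ε2 ∧ ε ≤ (v0 - u0) / 3 ∧ ε ≤ u0 / 2 ∧
      ε ≤ (π - v0) / 2 := by
    refine ⟨min ε1 (min ε2 (min ((v0 - u0) / 3) (min (u0 / 2) ((π - v0) / 2)))), ?_, ?_⟩
    · have := hu0.1
      simp only [gt_iff_lt, lt_min_iff]
      refine ⟨hε1, hε2, ?_, ?_, ?_⟩ <;> linarith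
    · simp
  obtain ⟨l1, l2, l3, l4, l5⟩ := hle
  let b : ContDiffBump v0 := ⟨ε / 2, ε, by linarith, by linarith⟩
  have hb1 : ContDiff ℝ 1 b := b.contDiff
  have hb0 : ∀ v, v ∉ Metric.closedBall v0 ε → b v = 0 := by
    intro v hv
    exact b.zero_of_le_dist (by
      simp only [Metric.mem_closedBall, not_le] at hv
      exact hv.le)
  obtain ⟨J1, C1⟩ := H1 ε hε l1 b hb1 hb0
  obtain ⟨J2, C2⟩ := H2 ε hε l2 b hb1 hb0
  have J0 : Integrable (fun v => b v • f v) :=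
    hf.locallyIntegrable.integrable_smul_left_of_hasCompactSupport b.continuous b.hasCompactSupport
  have hbi : Integrable b := b.integrable
  have hbp : 0 < ∫ v, b v := b.integral_pos
  refine ⟨ε, hε, fun u => (∫ v, b v)⁻¹ • ((∫ v, b v • f v) + (∫ v, b v • f (wF u v)) -
    ∫ v, b v • f (yF u v)), ?_, ?_⟩
  · exact ((contDiffOn_const.add C2).sub C1).const_smul _
  · have h2 := Measure.ae_ae_of_ae_prod hrel
    filter_upwards [h2] with u hu hub
    have hub' := abs_lt.1 (by simpa [Real.dist_eq] using hub : |u - u0| < ε)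
    have hz : ∀ᵐ v, b v • f u + b v • f (yF u v) - b v • f v - b v • f (wF u v) = 0 := by
      filter_upwards [hu] with v hv'
      by_cases hvb : v ∈ Metric.closedBall v0 ε
      · have hvb' := abs_le.1 (by simpa [Real.dist_eq] using hvb : |v - v0| ≤ ε)
        have := hv' (by linarith) (by linarith) (by linarith)
        rw [← smul_add, ← smul_sub, ← smul_sub, this, smul_zero]
      · simp [hb0 v hvb]
    have hi := integral_congr_ae hz
    have i1 : Integrable (fun v => b v • f u) := hbi.smul_const _
    have i2 : Integrable (fun v => b v • f (yF u v)) := J1 u hub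
    have i3 : Integrable (fun v => b v • f (wF u v)) := J2 u hub
    have i12 : Integrable (fun v => b v • f u + b v • f (yF u v)) := i1.add i2
    have i123 : Integrable (fun v => b v • f u + b v • f (yF u v) - b v • f v) := i12.sub J0
    rw [integral_sub i123 i3, integral_sub i12 J0, integral_add i1 i2,
      integral_smul_const] at hi
    simp only [integral_zero] at hi
    have hne : (∫ v, b v) ≠ 0 := hbp.ne'
    rw [eq_inv_smul_iff₀ hne]
    linear_combination hi

lemma exists_C1 {f : ℝ → ℂ} (hf : Integrable f) (hrel : RelAE f) :
    ∃ F : ℝ → ℂ, (∀ x ∈ Ioo 0 π, ContDiffAt ℝ 1 F x) ∧ ∀ᵐ x, x ∈ Ioo 0 π → f x = F x := by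
  let F : ℝ → ℂ := deriv (fun x => ∫ t in (0:ℝ)..x, f t)
  have key : ∀ x ∈ Ioo 0 π, ∃ ε > 0, ContDiffOn ℝ 1 F (Metric.ball x ε) ∧
      ∀ᵐ u, u ∈ Metric.ball x ε → f u = F u := by
    intro x hx
    obtain ⟨ε, hε, G, hG, hfG⟩ := local_C1 hf hrel hx
    have hFG : ∀ y ∈ Metric.ball x ε, F y = G y := by
      intro y hy
      have hsub : ∀ z ∈ Metric.ball x ε, uIcc x z ⊆ Metric.ball x ε := by
        intro z hz
        rw [Real.ball_eq_Ioo] at hz ⊢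
        intro t ht
        rcases mem_uIcc.1 ht with h | h <;> constructor <;> linarith [h.1, h.2, hz.1, hz.2]
      have e1 : ∀ z ∈ Metric.ball x ε, (∫ t in (0:ℝ)..z, f t) =
          (∫ t in (0:ℝ)..x, f t) + ∫ t in x..z, G t := by
        intro z hz
        rw [← intervalIntegral.integral_add_adjacent_intervals (b := x)
          hf.intervalIntegrable hf.intervalIntegrable]
        congr 1
        apply intervalIntegral.integral_congr_ae
        filter_upwards [hfG] with t ht htm
        exact ht (hsub z hz (uIoc_subset_uIcc htm))
      have hGc : ContinuousOn G (Metric.ball x ε) := hG.continuousOn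
      have hd : HasDerivAt (fun z => ∫ t in x..z, G t) (G y) y := by
        refine intervalIntegral.integral_hasDerivAt_right
          ((hGc.mono (hsub y hy)).intervalIntegrable)
          (hGc.stronglyMeasurableAtFilter Metric.isOpen_ball y hy)
          (hGc.continuousAt (Metric.isOpen_ball.mem_nhds hy))
      have hd2 : HasDerivAt (fun z => ∫ t in (0:ℝ)..z, f t) (G y) y := by
        refine (hd.const_add (∫ t in (0:ℝ)..x, f t)).congr_of_eventuallyEq ?_
        filter_upwards [Metric.isOpen_ball.mem_nhds hy] with z hz
        exact e1 z hz
      exact hd2.deriv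
    refine ⟨ε, hε, hG.congr hFG, ?_⟩
    filter_upwards [hfG] with u hu hub
    rw [hu hub, hFG u hub]
  refine ⟨F, ?_, ?_⟩
  · intro x hx
    obtain ⟨ε, hε, h, -⟩ := key x hx
    exact h.contDiffAt (Metric.ball_mem_nhds x hε)
  · rw [ae_iff]
    apply measure_null_of_locally_null
    intro x hx
    have hx' : x ∈ Ioo 0 π := by
      by_contra h
      exact hx (fun h' => absurd h' h)
    obtain ⟨ε, hε, -, h⟩ := key x hx'
    refine ⟨_, inter_mem_nhdsWithin _ (Metric.ball_mem_nhds x hε), ?_⟩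
    refine measure_mono_null ?_ (ae_iff.1 h)
    rintro u ⟨h1, h2⟩ h3
    exact h1 (fun _ => h3 h2)

lemma measurable_thF : Measurable (fun p : ℝ × ℝ => thF p.1 p.2) := by
  unfold thF
  simp only [Real.tan_eq_sin_div_cos]
  exact Real.measurable_arcsin.comp (by fun_prop)

lemma measurable_yF : Measurable (fun p : ℝ × ℝ => yF p.1 p.2) := by
  unfold yF
  exact Measurable.add (by fun_prop) measurable_thF

lemma measurable_wF : Measurable (fun p : ℝ × ℝ => wF p.1 p.2) := by
  unfold wF
  exact Measurable.add (by fun_prop) measurable_thF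

lemma measurableSet_U : MeasurableSet {p : ℝ × ℝ | 0 < p.1 ∧ p.1 < p.2 ∧ p.2 < π} := by
  measurability

lemma invol_null {g : ℝ → ℝ} {s N : Set ℝ} (hg : DifferentiableOn ℝ g s)
    (hs : MapsTo g s s) (hi : ∀ x ∈ s, g (g x) = x) (hN : volume N = 0) :
    volume (s ∩ g ⁻¹' N) = 0 := by
  have h1 : volume (g '' (s ∩ N)) = 0 :=
    addHaar_image_eq_zero_of_differentiableOn_of_addHaar_eq_zero volume
      (hg.mono inter_subset_left) (measure_mono_null inter_subset_right hN)
  refine measure_mono_null ?_ h1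
  rintro x ⟨hx, hxN⟩
  exact ⟨g x, ⟨hs hx, hxN⟩, hi x hx⟩

lemma ae_wF {P : ℝ → Prop} (h : ∀ᵐ x, P x) :
    ∀ᵐ p : ℝ × ℝ, 0 < p.1 → p.1 < p.2 → p.2 < π → P (wF p.1 p.2) := by
  set N := toMeasurable volume {x | ¬ P x}
  have hN : volume N = 0 := by rw [measure_toMeasurable]; exact ae_iff.1 h
  have hNm : MeasurableSet N := measurableSet_toMeasurable _ _
  let S : Set (ℝ × ℝ) := {p | 0 < p.1 ∧ p.1 < p.2 ∧ p.2 < π} ∩ (fun p => wF p.1 p.2) ⁻¹' N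
  have hS : MeasurableSet S := measurableSet_U.inter (measurable_wF hNm)
  have hS0 : (volume : Measure (ℝ × ℝ)) S = 0 := by
    rw [Measure.volume_eq_prod, Measure.measure_prod_null hS]
    refine Eventually.of_forall fun u => ?_
    by_cases hu : 0 < u
    · refine measure_mono_null ?_ (invol_null (g := wF u) (s := Ioo u π) (N := N) ?_ ?_ ?_ hN)
      · rintro v ⟨⟨-, h2, h3⟩, h4⟩
        exact ⟨⟨h2, h3⟩, h4⟩
      · intro v hv
        have h1 : DifferentiableAt ℝ (fun p : ℝ × ℝ => wF p.1 p.2) (u, v) :=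
          (contDiffAt_wF (contDiffAt_thF' hu hv.1 hv.2)).differentiableAt (by simp)
        exact (DifferentiableAt.comp (f := fun v : ℝ => (u, v)) v h1
          (by fun_prop)).differentiableWithinAt
      · intro v hv
        exact ⟨lt_wF hu hv.1 hv.2, (wF_mem hu hv.1 hv.2).2⟩
      · intro v hv
        exact wF_invol hu hv.1 hv.2
    · have : Prod.mk u ⁻¹' S = ∅ := by
        ext v; simp only [S, mem_preimage, mem_inter_iff, mem_ofPred_eq, mem_empty_iff_false, iff_false]
        tauto
      simp [this]
  rw [ae_iff]
  refine measure_mono_null ?_ hS0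
  intro p hp
  simp only [mem_ofPred_eq, Classical.not_imp] at hp
  exact ⟨⟨hp.1, hp.2.1, hp.2.2.1⟩, subset_toMeasurable _ _ hp.2.2.2⟩

lemma ae_yF {P : ℝ → Prop} (h : ∀ᵐ x, P x) :
    ∀ᵐ p : ℝ × ℝ, 0 < p.1 → p.1 < p.2 → p.2 < π → P (yF p.1 p.2) := by
  have h1 : ∀ᵐ x, P (π - x) :=
    (Measure.measurePreserving_sub_left volume π).quasiMeasurePreserving.ae h
  have h2 := ae_wF h1
  have hmp : Measure.QuasiMeasurePreserving (fun p : ℝ × ℝ => (π - p.2, π - p.1))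
      volume volume := by
    have a := ((Measure.measurePreserving_sub_left (volume : Measure ℝ) π).prod
      (Measure.measurePreserving_sub_left (volume : Measure ℝ) π))
    exact (a.comp Measure.measurePreserving_swap).quasiMeasurePreserving
  have h3 := hmp.ae h2
  filter_upwards [h3] with p hp a b c
  have := hp (by simpa using c) (by simpa using b) (by simpa using a)
  convert this using 1
  unfold yF wF thF
  have e1 : (π - p.1 - (π - p.2)) / 2 = (p.2 - p.1) / 2 := by ring
  have e2 : (π - p.2 + (π - p.1)) / 2 = π - (p.1 + p.2) / 2 := by ring
  simp only [e1, e2, Real.cos_pi_sub, mul_neg, Real.arcsin_neg]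
  ring

lemma rel_everywhere {f F : ℝ → ℂ} (hrel : RelAE f) (hF : ∀ x ∈ Ioo 0 π, ContDiffAt ℝ 1 F x)
    (hfF : ∀ᵐ x, x ∈ Ioo 0 π → f x = F x) {u v : ℝ} (hu : 0 < u) (huv : u < v) (hv : v < π) :
    F u + F (yF u v) - F v - F (wF u v) = 0 := by
  let U : Set (ℝ × ℝ) := {p | 0 < p.1 ∧ p.1 < p.2 ∧ p.2 < π}
  have hU : IsOpen U := by
    refine (isOpen_lt continuous_const continuous_fst).inter
      ((isOpen_lt continuous_fst continuous_snd).inter (isOpen_lt continuous_snd continuous_const))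
  have ey := ae_yF hfF
  have ew := ae_wF hfF
  have e1 : ∀ᵐ p : ℝ × ℝ, p.1 ∈ Ioo 0 π → f p.1 = F p.1 :=
    Measure.quasiMeasurePreserving_fst.ae hfF
  have e2 : ∀ᵐ p : ℝ × ℝ, p.2 ∈ Ioo 0 π → f p.2 = F p.2 :=
    Measure.quasiMeasurePreserving_snd.ae hfF
  have hae : (fun p : ℝ × ℝ => F p.1 + F (yF p.1 p.2) - F p.2 - F (wF p.1 p.2))
      =ᵐ[volume.restrict U] (fun _ => 0) := by
    rw [EventuallyEq, ae_restrict_iff' hU.measurableSet]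
    filter_upwards [hrel, ey, ew, e1, e2] with p h0 hy hw h1 h2 hp
    obtain ⟨a, b, c⟩ := hp
    rw [← hy a b c (yF_mem a b c), ← hw a b c (wF_mem a b c), ← h1 ⟨a, by linarith⟩,
      ← h2 ⟨by linarith, c⟩]
    exact h0 a b c
  have hcont : ContinuousOn (fun p : ℝ × ℝ => F p.1 + F (yF p.1 p.2) - F p.2 - F (wF p.1 p.2)) U := by
    rintro p ⟨a, b, c⟩
    apply ContinuousAt.continuousWithinAt
    have hc : ∀ {g : ℝ × ℝ → ℝ}, ContinuousAt g p → g p ∈ Ioo 0 π →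
        ContinuousAt (fun p => F (g p)) p := fun {g} hg hm =>
      ContinuousAt.comp (hF _ hm).continuousAt hg
    have hth := contDiffAt_thF' a b c
    exact (((hc continuousAt_fst ⟨a, by linarith⟩).add
      (hc (contDiffAt_yF hth).continuousAt (yF_mem a b c))).sub
      (hc continuousAt_snd ⟨by linarith, c⟩)).sub
      (hc (contDiffAt_wF hth).continuousAt (wF_mem a b c))
  have := Measure.eqOn_open_of_ae_eq hae hU hcont continuousOn_const
  exact this (x := (u, v)) ⟨hu, huv, hv⟩

lemma limit_N {F : ℝ → ℂ} (hF : ∀ x ∈ Ioo 0 π, ContDiffAt ℝ 1 F x)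
    (hrel : ∀ u v, 0 < u → u < v → v < π → F u + F (yF u v) - F v - F (wF u v) = 0)
    {p q : ℝ} (hp : 0 < p) (hq : 0 < q) :
    Tendsto (fun l : ℝ => l⁻¹ • (F (l * p) - F (π - l * q))) (𝓝[>] 0)
      (𝓝 ((p + q) • deriv F (Real.arccos ((p - q) / (p + q))))) := by
  obtain ⟨d, hd⟩ : ∃ d, d = (p + q) / 2 := ⟨_, rfl⟩
  obtain ⟨t, ht⟩ : ∃ t, t = (p - q) / 2 := ⟨_, rfl⟩
  have hd0 : 0 < d := by linarith
  have htd : (p - q) / (p + q) = t / d := by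
    rw [hd, ht]; field_simp
  have hpq : p + q = 2 * d := by linarith
  rw [htd, hpq]
  have hlim0 : ∀ c : ℝ, Tendsto (fun l : ℝ => Real.sin (l * c) / l) (𝓝[>] 0) (𝓝 c) := by
    intro c
    have h1 : HasDerivAt (fun l : ℝ => Real.sin (l * c)) c 0 := by
      have := ((hasDerivAt_id (0:ℝ)).mul_const c).sin
      simpa using this
    have h2 := h1.tendsto_slope_zero_right
    refine h2.congr fun l => ?_
    simp [div_eq_inv_mul]
  have hcos : Tendsto (fun l : ℝ => Real.cos (l * d)) (𝓝[>] 0) (𝓝 1) := by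
    have : ContinuousAt (fun l : ℝ => Real.cos (l * d)) 0 := by fun_prop
    have h := this.tendsto
    simp only [zero_mul, Real.cos_zero] at h
    exact h.mono_left nhdsWithin_le_nhds
  let r : ℝ → ℝ := fun l => Real.sin (l * t) * Real.cos (l * d) / Real.sin (l * d)
  have hr : Tendsto r (𝓝[>] 0) (𝓝 (t / d)) := by
    have h := ((hlim0 t).mul hcos).div (hlim0 d) hd0.ne'
    rw [mul_one] at h
    refine h.congr' ?_
    filter_upwards [self_mem_nhdsWithin] with l hl
    have hl' : l ≠ 0 := (mem_Ioi.1 hl).ne'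
    simp only [r, Pi.mul_apply, Pi.div_apply]
    field_simp
  have htd1 : t / d < 1 := by rw [div_lt_one hd0]; linarith
  have htd2 : -1 < t / d := by rw [lt_div_iff₀ hd0]; linarith
  obtain ⟨σ0, hσ0⟩ : ∃ σ0, σ0 = Real.arccos (t / d) := ⟨_, rfl⟩
  rw [← hσ0]
  have hσ0m : σ0 ∈ Ioo 0 π := by
    rw [hσ0]
    refine ⟨Real.arccos_pos.2 htd1, ?_⟩
    have := Real.arccos_lt_pi.2 htd2
    exact this
  let σ : ℝ → ℝ := fun l => Real.arccos (r l)
  have hσ : Tendsto σ (𝓝[>] 0) (𝓝 σ0) := by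
    rw [hσ0]; exact (Real.continuous_arccos.tendsto _).comp hr
  have hld : Tendsto (fun l : ℝ => l * d) (𝓝[>] 0) (𝓝 0) := by
    have : ContinuousAt (fun l : ℝ => l * d) 0 := by fun_prop
    have h := this.tendsto
    simp only [zero_mul] at h
    exact h.mono_left nhdsWithin_le_nhds
  have hV : Tendsto (fun l => σ l + l * d) (𝓝[>] 0) (𝓝 σ0) := by simpa using hσ.add hld
  have hU : Tendsto (fun l => σ l - l * d) (𝓝[>] 0) (𝓝 σ0) := by simpa using hσ.sub hld
  have hstrict : HasStrictDerivAt F (deriv F σ0) σ0 :=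
    (hF σ0 hσ0m).hasStrictDerivAt (by simp)
  have hlo := hstrict.isLittleO.comp_tendsto (hV.prodMk_nhds hU)
  have hlim := hlo.tendsto_inv_smul_nhds_zero
  have hlim2 := (hlim.const_smul (2 * d)).add_const ((2 * d) • deriv F σ0)
  rw [smul_zero, zero_add] at hlim2
  refine hlim2.congr' ?_
  filter_upwards [self_mem_nhdsWithin, hV.eventually_lt_const hσ0m.2,
    hU.eventually_const_lt hσ0m.1, hr.eventually_lt_const htd1, hr.eventually_const_lt htd2]
    with l hl h1 h2 h3 h4
  have hl : 0 < l := hl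
  have hldp : 0 < l * d := by positivity
  have hσl : Real.cos (σ l) = r l := Real.cos_arccos h4.le h3.le
  have hsin : 0 < Real.sin (l * d) := Real.sin_pos_of_pos_of_lt_pi hldp (by linarith)
  have hcosp : 0 < Real.cos (l * d) := Real.cos_pos_of_mem_Ioo ⟨by linarith, by linarith⟩
  have e1 : ((σ l + l * d) - (σ l - l * d)) / 2 = l * d := by ring
  have e2 : ((σ l - l * d) + (σ l + l * d)) / 2 = σ l := by ring
  have hb1 : l * t ≤ l * d := mul_le_mul_of_nonneg_left (by linarith) hl.le
  have hb2 : -(l * d) ≤ l * t := by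
    rw [← mul_neg]; exact mul_le_mul_of_nonneg_left (by linarith) hl.le
  have hth : thF (σ l - l * d) (σ l + l * d) = l * t := by
    unfold thF
    rw [e1, e2, hσl, Real.tan_eq_sin_div_cos]
    have : Real.sin (l * d) / Real.cos (l * d) * r l = Real.sin (l * t) := by
      simp only [r]; field_simp
    rw [this, Real.arcsin_sin (by linarith) (by linarith)]
  have hy : yF (σ l - l * d) (σ l + l * d) = l * p := by
    unfold yF; rw [e1, hth, hd, ht]; ring
  have hw : wF (σ l - l * d) (σ l + l * d) = π - l * q := by
    unfold wF; rw [e1, hth, hd, ht]; ring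
  have hR := hrel _ _ h2 (by linarith) h1
  rw [hy, hw] at hR
  have hR' : F (l * p) - F (π - l * q) = F (σ l + l * d) - F (σ l - l * d) := by
    linear_combination hR
  rw [hR']
  simp only [Function.comp_apply]
  have e3 : (σ l + l * d) - (σ l - l * d) = 2 * d * l := by ring
  simp only [ContinuousLinearMap.toSpanSingleton_apply, e3]
  rw [smul_sub, smul_smul _ _ (deriv F σ0), inv_mul_cancel₀ (by positivity), one_smul, smul_sub,
    sub_add_cancel, smul_smul]
  congr 1
  field_simp

lemma bilin_alg {N : ℝ → ℝ → ℂ} (hom : ∀ l p q, 0 < l → 0 < p → 0 < q → N (l * p) (l * q) = l * N p q)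
    (mix : ∀ p p' q q', 0 < p → 0 < p' → 0 < q → 0 < q' → N p q - N p' q - N p q' + N p' q' = 0) :
    ∃ A B : ℂ, ∀ p q, 0 < p → 0 < q → N p q = p * A + q * B := by
  have h1 : ∀ l p, 0 < l → 0 < p → N (l * p) 1 = l * N p 1 + N l 1 - l * N 1 1 := by
    intro l p hl hp
    have m := mix (l * p) l l 1 (by positivity) hl hl one_pos
    have a := hom l p 1 hl hp one_pos
    have b := hom l 1 1 hl one_pos one_pos
    rw [mul_one] at a b
    rw [a, b] at m
    linear_combination -m
  have h2 : ∀ p, 0 < p → N p 1 = N 1 1 + (p - 1) * (N 2 1 - N 1 1) := by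
    intro p hp
    have a := h1 2 p two_pos hp
    have b := h1 p 2 hp two_pos
    rw [mul_comm p 2, a] at b
    push_cast at b
    linear_combination b
  refine ⟨N 2 1 - N 1 1, 2 * N 1 1 - N 2 1, fun p q hp hq => ?_⟩
  have a := hom q (p / q) 1 hq (by positivity) one_pos
  rw [mul_one, mul_div_cancel₀ _ hq.ne', h2 _ (by positivity)] at a
  rw [a]
  have : (q : ℂ) ≠ 0 := by exact_mod_cast hq.ne'
  push_cast
  field_simp
  ring

lemma classify {F : ℝ → ℂ} (hF : ∀ x ∈ Ioo 0 π, ContDiffAt ℝ 1 F x)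
    (hrel : ∀ u v, 0 < u → u < v → v < π → F u + F (yF u v) - F v - F (wF u v) = 0) :
    ∃ c₁ c₂ : ℂ, ∀ x ∈ Ioo 0 π, F x = c₁ + c₂ * (Real.sin x : ℝ) := by
  let N : ℝ → ℝ → ℂ := fun p q => (p + q) • deriv F (Real.arccos ((p - q) / (p + q)))
  obtain ⟨A, B, hAB⟩ := bilin_alg (N := N) (by
      intro l p q hl hp hq
      have : (l * p - l * q) / (l * p + l * q) = (p - q) / (p + q) := by
        field_simp
      simp only [N]
      rw [this, ← mul_add, mul_smul, Complex.real_smul]) (by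
      intro p p' q q' hp hp' hq hq'
      have h := (((limit_N hF hrel hp hq).sub (limit_N hF hrel hp' hq)).sub
        (limit_N hF hrel hp hq')).add (limit_N hF hrel hp' hq')
      refine tendsto_nhds_unique h ?_
      refine (tendsto_const_nhds (x := (0:ℂ))).congr fun l => ?_
      rw [← smul_sub, ← smul_sub, ← smul_add]
      simp)
  obtain ⟨a, ha⟩ : ∃ a : ℂ, a = (A + B) / 2 := ⟨_, rfl⟩
  obtain ⟨b, hb⟩ : ∃ b : ℂ, b = (A - B) / 2 := ⟨_, rfl⟩
  have hderiv : ∀ x ∈ Ioo 0 π, deriv F x = a + b * (Real.cos x : ℝ) := by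
    intro x hx
    have hcos1 : Real.cos x < 1 := by
      rw [← Real.cos_zero]
      exact Real.cos_lt_cos_of_nonneg_of_le_pi le_rfl hx.2.le hx.1
    have hcos2 : -1 < Real.cos x := by
      rw [← Real.cos_pi]
      exact Real.cos_lt_cos_of_nonneg_of_le_pi hx.1.le le_rfl hx.2
    have h := hAB (1 + Real.cos x) (1 - Real.cos x) (by linarith) (by linarith)
    simp only [N] at h
    have e1 : (1 + Real.cos x + (1 - Real.cos x)) = 2 := by ring
    have e2 : (1 + Real.cos x - (1 - Real.cos x)) / 2 = Real.cos x := by ring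
    rw [e1, e2, Real.arccos_cos hx.1.le hx.2.le, Complex.real_smul] at h
    push_cast at h ⊢
    rw [ha, hb]
    linear_combination h / 2
  let G : ℝ → ℂ := fun x => F x - (a * (x : ℝ) + b * (Real.sin x : ℝ))
  have hG : ∀ x ∈ Ioo 0 π, HasDerivAt G 0 x := by
    intro x hx
    have h1 : HasDerivAt F (a + b * (Real.cos x : ℝ)) x := by
      rw [← hderiv x hx]
      exact ((hF x hx).differentiableAt (by simp)).hasDerivAt
    have h2 : HasDerivAt (fun x : ℝ => a * ((x : ℝ) : ℂ)) (a * ((1 : ℝ) : ℂ)) x :=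
      (HasDerivAt.ofReal_comp (hasDerivAt_id x)).const_mul a
    have h3 : HasDerivAt (fun x : ℝ => b * ((Real.sin x : ℝ) : ℂ)) (b * ((Real.cos x : ℝ) : ℂ)) x :=
      (HasDerivAt.ofReal_comp (Real.hasDerivAt_sin x)).const_mul b
    refine (h1.sub (h2.add h3)).congr_deriv ?_
    simp
  obtain ⟨c, hc⟩ := isOpen_Ioo.exists_is_const_of_deriv_eq_zero isPreconnected_Ioo
    (fun x hx => (hG x hx).differentiableAt.differentiableWithinAt)
    (fun x hx => (hG x hx).deriv)
  have hFx : ∀ x ∈ Ioo 0 π, F x = c + a * (x : ℝ) + b * (Real.sin x : ℝ) := by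
    intro x hx
    have := hc x hx
    simp only [G] at this
    linear_combination this
  have ha0 : a = 0 := by
    have p0 := Real.pi_pos
    have hu : 0 < π / 3 := by linarith
    have huv : π / 3 < π / 2 := by linarith
    have hv : π / 2 < π := by linarith
    have h := hrel _ _ hu huv hv
    have hs := sin_rel hu huv hv
    have hm := sum_rel (π / 3) (π / 2)
    rw [hFx _ ⟨hu, by linarith⟩, hFx _ ⟨by linarith, hv⟩, hFx _ (yF_mem hu huv hv),
      hFx _ (wF_mem hu huv hv)] at h
    have hs' := congrArg (fun x : ℝ => (x : ℂ)) hs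
    have hm' := congrArg (fun x : ℝ => (x : ℂ)) hm
    simp only [Complex.ofReal_add] at hs' hm'
    have : a * (π : ℂ) = 0 := by linear_combination -h + b * hs' + a * hm'
    rcases mul_eq_zero.1 this with h | h
    · exact h
    · exact absurd (by exact_mod_cast h) p0.ne'
  refine ⟨c, b, fun x hx => ?_⟩
  rw [hFx x hx, ha0]; ring

lemma core_forward {f : ℝ → ℂ} (hf : Integrable f) (hrel : RelAE f) :
    ∃ c₁ c₂ : ℂ, ∀ᵐ t, t ∈ Ioo 0 π → f t = c₁ + c₂ * (Real.sin t : ℝ) := by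
  obtain ⟨F, hF, hfF⟩ := exists_C1 hf hrel
  obtain ⟨c₁, c₂, h⟩ := classify hF (fun u v hu huv hv => rel_everywhere hrel hF hfF hu huv hv)
  refine ⟨c₁, c₂, ?_⟩
  filter_upwards [hfF] with t ht htm
  rw [ht htm, h t htm]

lemma core_backward {f : ℝ → ℂ} {c₁ c₂ : ℂ}
    (h : ∀ᵐ t, t ∈ Ioo 0 π → f t = c₁ + c₂ * (Real.sin t : ℝ)) : RelAE f := by
  have e1 : ∀ᵐ p : ℝ × ℝ, p.1 ∈ Ioo 0 π → f p.1 = c₁ + c₂ * (Real.sin p.1 : ℝ) :=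
    Measure.quasiMeasurePreserving_fst.ae h
  have e2 : ∀ᵐ p : ℝ × ℝ, p.2 ∈ Ioo 0 π → f p.2 = c₁ + c₂ * (Real.sin p.2 : ℝ) :=
    Measure.quasiMeasurePreserving_snd.ae h
  unfold RelAE
  filter_upwards [ae_yF h, ae_wF h, e1, e2] with p hy hw h1 h2 a b c
  rw [hy a b c (yF_mem a b c), hw a b c (wF_mem a b c), h1 ⟨a, by linarith⟩, h2 ⟨by linarith, c⟩]
  have hs' := congrArg (fun x : ℝ => (x : ℂ)) (sin_rel a b c)
  simp only [Complex.ofReal_add] at hs'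
  linear_combination c₂ * hs'

/-- The collision expression. -/
def collE (ψ : ℝ → ℂ) (x z : ℝ) : ℂ := ψ x + ψ (hFPU x z) - ψ z - ψ (x - z + hFPU x z)

lemma mod2pi_of_mem {x : ℝ} (hx : x ∈ Ico 0 (2 * π)) : mod2pi x = x := by
  have : ⌊x / (2 * π)⌋ = 0 := by
    rw [Int.floor_eq_zero_iff]
    exact ⟨div_nonneg hx.1 (by positivity), (div_lt_one (by positivity)).2 hx.2⟩
  simp [mod2pi, this]

lemma mod2pi_mem (x : ℝ) : mod2pi x ∈ Ico 0 (2 * π) := by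
  have hp : 0 < 2 * π := by positivity
  have h1 := Int.floor_le (x / (2 * π))
  have h2 := Int.lt_floor_add_one (x / (2 * π))
  rw [le_div_iff₀ hp] at h1
  rw [div_lt_iff₀ hp] at h2
  unfold mod2pi
  constructor <;> linarith

lemma per_sub {ψ : ℝ → ℂ} (hper : Function.Periodic ψ (2 * π)) (x : ℝ) (n : ℤ) :
    ψ (x - 2 * π * n) = ψ x := by
  rw [mul_comm]; exact hper.sub_int_mul_eq n

lemma collE_mod {ψ : ℝ → ℂ} (hper : Function.Periodic ψ (2 * π)) (x z : ℝ) :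
    collE ψ x z = collE ψ (mod2pi x) (mod2pi z) := by
  unfold collE hFPU
  rw [mod2pi_of_mem (mod2pi_mem x), mod2pi_of_mem (mod2pi_mem z)]
  have e1 : ψ (mod2pi x) = ψ x := per_sub hper x _
  have e2 : ψ (mod2pi z) = ψ z := per_sub hper z _
  have e3 : ψ (h0 (mod2pi x) (mod2pi z) - (x - mod2pi x)) = ψ (h0 (mod2pi x) (mod2pi z)) := by
    have hm : mod2pi x = x - 2 * π * ⌊x / (2 * π)⌋ := rfl
    have hq := per_sub hper (h0 (mod2pi x) (mod2pi z)) ⌊x / (2 * π)⌋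
    refine Eq.trans ?_ hq
    congr 1
    linarith
  have e4 : ψ (x - z + (h0 (mod2pi x) (mod2pi z) - (x - mod2pi x))) =
      ψ (mod2pi x - mod2pi z + h0 (mod2pi x) (mod2pi z)) := by
    rw [← per_sub hper (mod2pi x - mod2pi z + h0 (mod2pi x) (mod2pi z)) ⌊z / (2 * π)⌋]
    congr 1
    have : mod2pi z = z - 2 * π * ⌊z / (2 * π)⌋ := rfl
    linarith
  rw [e1, e2, e3, e4]; simp

lemma collE_lt {ψ : ℝ → ℂ} (hper : Function.Periodic ψ (2 * π)) {u v : ℝ} (hu : 0 < u)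
    (huv : u < v) (hv : v < π) :
    collE ψ (2 * u) (2 * v) = ψ (2 * u) + ψ (2 * yF u v) - ψ (2 * v) - ψ (2 * wF u v) := by
  unfold collE hFPU
  rw [mod2pi_of_mem (x := 2 * u) ⟨by linarith, by linarith⟩,
    mod2pi_of_mem (x := 2 * v) ⟨by linarith, by linarith⟩]
  have e : h0 (2 * u) (2 * v) = 2 * yF u v := by
    unfold h0 yF thF
    rw [abs_of_pos (by linarith), show (2 * v - 2 * u) / 4 = (v - u) / 2 by ring,
      show (2 * u + 2 * v) / 4 = (u + v) / 2 by ring]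
    ring
  rw [e]
  have e2 : 2 * u - 2 * v + (2 * yF u v - (2 * u - 2 * u)) = 2 * wF u v - 2 * π := by
    linarith [sum_rel u v]
  rw [e2, hper.sub_eq]; simp

lemma collE_gt {ψ : ℝ → ℂ} (hper : Function.Periodic ψ (2 * π)) {u v : ℝ} (hu : 0 < u)
    (huv : u < v) (hv : v < π) :
    collE ψ (2 * v) (2 * u) = - (ψ (2 * u) + ψ (2 * yF u v) - ψ (2 * v) - ψ (2 * wF u v)) := by
  unfold collE hFPU
  rw [mod2pi_of_mem (x := 2 * u) ⟨by linarith, by linarith⟩,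
    mod2pi_of_mem (x := 2 * v) ⟨by linarith, by linarith⟩]
  have e : h0 (2 * v) (2 * u) = 2 * wF u v - 2 * π := by
    unfold h0 wF thF
    rw [abs_of_neg (by linarith), show -(2 * u - 2 * v) / 4 = (v - u) / 2 by ring,
      show (2 * v + 2 * u) / 4 = (u + v) / 2 by ring]
    ring
  rw [e]
  have e2 : 2 * v - 2 * u + (2 * wF u v - 2 * π - (2 * v - 2 * v)) = 2 * yF u v := by
    linarith [sum_rel u v]
  rw [e2, sub_self, sub_zero, hper.sub_eq]; ring

lemma ae_smul_of_ae {E : Type*} [NormedAddCommGroup E] [NormedSpace ℝ E] [MeasurableSpace E]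
    [BorelSpace E] [FiniteDimensional ℝ E] (μ : Measure E) [μ.IsAddHaarMeasure] {c : ℝ}
    (hc : c ≠ 0) {P : E → Prop} (h : ∀ᵐ x ∂μ, P x) : ∀ᵐ x ∂μ, P (c • x) := by
  rw [ae_iff] at h ⊢
  have := Measure.addHaar_preimage_smul μ hc {x | ¬ P x}
  rw [h, mul_zero] at this
  exact this

/-- **Theorem 2.2 (collisional invariants).**  A `2π`-periodic, locally integrable
`ψ : ℝ → ℂ` satisfies `ψ(x) + ψ(h(x,z)) − ψ(z) − ψ(x−z+h(x,z)) = 0` for a.e. `(x,z) ∈ ℝ²`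
if and only if `ψ(x) = c₁ + c₂ |sin(x/2)|` a.e. for some constants `c₁, c₂ ∈ ℂ`. -/
theorem collisional_invariants_characterization
    (ψ : ℝ → ℂ) (hper : Function.Periodic ψ (2 * π))
    (hint : IntegrableOn ψ II) :
    (∀ᵐ p : ℝ × ℝ,
        ψ p.1 + ψ (hFPU p.1 p.2) - ψ p.2 - ψ (p.1 - p.2 + hFPU p.1 p.2) = 0) ↔
      ∃ c₁ c₂ : ℂ, ∀ᵐ x : ℝ, ψ x = c₁ + c₂ * (|Real.sin (x / 2)| : ℝ) := by
  
  change (∀ᵐ p : ℝ × ℝ, collE ψ p.1 p.2 = 0) ↔ _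
  have hpi := Real.pi_pos
  let f : ℝ → ℂ := fun t => (Ioo 0 (2 * π)).indicator ψ (2 * t)
  have hff : ∀ t ∈ Ioo 0 π, f t = ψ (2 * t) := by
    intro t ht
    simp only [f]
    rw [indicator_of_mem]
    exact ⟨by linarith [ht.1], by linarith [ht.2]⟩
  have hfi : Integrable f := by
    have h1 : Integrable ((Ioo 0 (2 * π)).indicator ψ) := by
      rw [integrable_indicator_iff measurableSet_Ioo]
      exact hint.mono_set Ioo_subset_Ico_self
    exact h1.comp_mul_left' two_ne_zero
  have hrelf : ∀ {u v : ℝ}, 0 < u → u < v → v < π →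
      f u + f (yF u v) - f v - f (wF u v) =
        ψ (2 * u) + ψ (2 * yF u v) - ψ (2 * v) - ψ (2 * wF u v) := by
    intro u v hu huv hv
    rw [hff u ⟨hu, by linarith⟩, hff v ⟨by linarith, hv⟩, hff _ (yF_mem hu huv hv),
      hff _ (wF_mem hu huv hv)]
  constructor
  · intro h
    have h2 := ae_smul_of_ae (volume : Measure (ℝ × ℝ)) (two_ne_zero : (2:ℝ) ≠ 0) h
    have hR : RelAE f := by
      unfold RelAE
      filter_upwards [h2] with p hp a b c
      rw [hrelf a b c, ← collE_lt hper a b c]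
      simpa using hp
    obtain ⟨c₁, c₂, hc⟩ := core_forward hfi hR
    refine ⟨c₁, c₂, ?_⟩
    have h3 : ∀ᵐ x : ℝ, x ∈ Ico 0 (2 * π) → ψ x = c₁ + c₂ * (|Real.sin (x / 2)| : ℝ) := by
      have h4 := ae_smul_of_ae (volume : Measure ℝ) (by norm_num : (1/2:ℝ) ≠ 0) hc
      have h5 : ∀ᵐ x : ℝ, x ≠ 0 := Measure.ae_ne volume 0
      filter_upwards [h4, h5] with x hx hx0 hxm
      have hm : (1/2:ℝ) • x ∈ Ioo 0 π := by
        have : 0 < x := lt_of_le_of_ne hxm.1 hx0.symm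
        simp only [smul_eq_mul]
        exact ⟨by linarith, by linarith [hxm.2]⟩
      have := hx hm
      rw [hff _ hm] at this
      have e1 : 2 * (1/2:ℝ) • x = x := by simp
      have e2 : (1/2:ℝ) • x = x / 2 := by simp; ring
      rw [e1, e2] at this
      rw [e2] at hm
      rw [this, abs_of_pos (Real.sin_pos_of_pos_of_lt_pi hm.1 hm.2)]
    have h6 : ∀ᵐ x : ℝ, ∀ n : ℤ, x - 2 * π * n ∈ Ico 0 (2 * π) →
        ψ (x - 2 * π * n) = c₁ + c₂ * (|Real.sin ((x - 2 * π * n) / 2)| : ℝ) := by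
      rw [ae_all_iff]
      intro n
      exact (measurePreserving_sub_right volume (2 * π * (n:ℝ))).quasiMeasurePreserving.ae h3
    filter_upwards [h6] with x hx
    have := hx ⌊x / (2 * π)⌋ (mod2pi_mem x)
    rw [per_sub hper] at this
    rw [this]
    congr 3
    rw [show (x - 2 * π * ⌊x / (2 * π)⌋) / 2 = x / 2 - ⌊x / (2 * π)⌋ * π by ring,
      Real.sin_sub_int_mul_pi, abs_mul]
    simp
  · rintro ⟨c₁, c₂, h⟩
    have h1 := ae_smul_of_ae (volume : Measure ℝ) (two_ne_zero : (2:ℝ) ≠ 0) h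
    have h2 : ∀ᵐ t, t ∈ Ioo 0 π → f t = c₁ + c₂ * (Real.sin t : ℝ) := by
      filter_upwards [h1] with t ht htm
      rw [hff t htm]
      simp only [smul_eq_mul] at ht
      rw [ht, mul_div_cancel_left₀ _ two_ne_zero,
        abs_of_pos (Real.sin_pos_of_pos_of_lt_pi htm.1 htm.2)]
    have hR : ∀ᵐ p : ℝ × ℝ, 0 < p.1 → p.1 < p.2 → p.2 < π →
      f p.1 + f (yF p.1 p.2) - f p.2 - f (wF p.1 p.2) = 0 := core_backward h2
    have hRs := (Measure.measurePreserving_swap (μ := (volume : Measure ℝ))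
      (ν := (volume : Measure ℝ))).quasiMeasurePreserving.ae hR
    have h3 : ∀ᵐ p : ℝ × ℝ, p.1 ∈ Ioo 0 π → p.2 ∈ Ioo 0 π → collE ψ (2 * p.1) (2 * p.2) = 0 := by
      filter_upwards [hR, hRs] with p hp hps m1 m2
      rcases lt_trichotomy p.1 p.2 with hlt | heq | hgt
      · rw [collE_lt hper m1.1 hlt m2.2, ← hrelf m1.1 hlt m2.2]
        exact hp m1.1 hlt m2.2
      · rw [heq]; simp [collE]
      · rw [collE_gt hper m2.1 hgt m1.2, ← hrelf m2.1 hgt m1.2, neg_eq_zero]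
        exact hps m2.1 hgt m1.2
    have h4 : ∀ᵐ p : ℝ × ℝ, p.1 ∈ Ico 0 (2 * π) → p.2 ∈ Ico 0 (2 * π) → collE ψ p.1 p.2 = 0 := by
      have h5 := ae_smul_of_ae (volume : Measure (ℝ × ℝ)) (by norm_num : (1/2:ℝ) ≠ 0) h3
      have h0 : ∀ᵐ x : ℝ, x ≠ 0 := Measure.ae_ne volume 0
      have n1 : ∀ᵐ p : ℝ × ℝ, p.1 ≠ 0 := Measure.quasiMeasurePreserving_fst.ae h0
      have n2 : ∀ᵐ p : ℝ × ℝ, p.2 ≠ 0 := Measure.quasiMeasurePreserving_snd.ae h0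
      filter_upwards [h5, n1, n2] with p hp a b m1 m2
      have q1 : 0 < p.1 := lt_of_le_of_ne m1.1 a.symm
      have q2 : 0 < p.2 := lt_of_le_of_ne m2.1 b.symm
      simp only [Prod.smul_fst, Prod.smul_snd, smul_eq_mul] at hp
      have := hp ⟨by linarith, by linarith [m1.2]⟩ ⟨by linarith, by linarith [m2.2]⟩
      rwa [show 2 * (1/2 * p.1) = p.1 by ring, show 2 * (1/2 * p.2) = p.2 by ring] at this
    have h6 : ∀ᵐ p : ℝ × ℝ, ∀ n m : ℤ, p.1 - 2 * π * n ∈ Ico 0 (2 * π) →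
        p.2 - 2 * π * m ∈ Ico 0 (2 * π) →
        collE ψ (p.1 - 2 * π * n) (p.2 - 2 * π * m) = 0 := by
      rw [ae_all_iff]; intro n
      rw [ae_all_iff]; intro m
      exact (measurePreserving_sub_right (volume : Measure (ℝ × ℝ))
        (2 * π * (n:ℝ), 2 * π * (m:ℝ))).quasiMeasurePreserving.ae h4
    filter_upwards [h6] with p hp
    rw [collE_mod hper]
    exact hp _ _ (mod2pi_mem p.1) (mod2pi_mem p.2)
end
end

section
/- Let G : ℝ³ → ℂ be 2π-periodic in each variable and continuous. Then the limit as ε → 0⁺ of ∫_{U₋} δ_ε(Ω(x,y,z)) G(x,y,z) dx dy dz exists and equals ∫_{I²} (2 / √(F₊(x,z))) · G(x, h(x,z), z) dx dz. -/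
open MeasureTheory Real Set Filter
open scoped Topology ENNReal ComplexConjugate

noncomputable section

/-- The regularized delta function `δ_ε(X) = (ε/π)/(ε² + X²)`. -/
def deltaE (ε X : ℝ) : ℝ := (ε / π) / (ε ^ 2 + X ^ 2)

/-- The set `U₋ = {(x,y,z) ∈ [0,2π]³ : z ≥ x+y or z ≤ x+y−2π}` as a subset of `ℝ³`. -/
def Uminus : Set (ℝ × ℝ × ℝ) :=
  {p | p.1 ∈ Set.Icc 0 (2 * π) ∧ p.2.1 ∈ Set.Icc 0 (2 * π) ∧ p.2.2 ∈ Set.Icc 0 (2 * π) ∧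
    (p.1 + p.2.1 ≤ p.2.2 ∨ p.2.2 ≤ p.1 + p.2.1 - 2 * π)}

lemma int_lor (c : ℝ) (hc : 0 < c) :
    Integrable (fun s : ℝ => (1 + (c * s) ^ 2)⁻¹) ∧ ∫ s : ℝ, (1 + (c * s) ^ 2)⁻¹ = π / c := by
  constructor
  · exact (integrable_inv_one_add_sq).comp_mul_left' hc.ne'
  · rw [Measure.integral_comp_mul_left (fun s : ℝ => (1 + s ^ 2)⁻¹) c, integral_univ_inv_one_add_sq,
      abs_of_pos (inv_pos.2 hc), smul_eq_mul]
    field_simp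

/-- rescaled integrand -/
def Phi (φ : ℝ → ℝ) (H : ℝ → ℂ) (S : Set ℝ) (y₀ ε s : ℝ) : ℂ :=
  ε • S.indicator (fun y => deltaE ε (φ y) • H y) (y₀ + ε * s)

lemma Phi_int (φ : ℝ → ℝ) (H : ℝ → ℂ) (S : Set ℝ) (hS : MeasurableSet S) (y₀ ε : ℝ) (hε : 0 < ε) :
    ∫ s, Phi φ H S y₀ ε s = ∫ y in S, deltaE ε (φ y) • H y := by
  unfold Phi
  rw [integral_smul, Measure.integral_comp_mul_left
    (fun t => S.indicator (fun y => deltaE ε (φ y) • H y) (y₀ + t)) ε,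
    integral_add_left_eq_self (fun t => S.indicator (fun y => deltaE ε (φ y) • H y) t),
    integral_indicator hS, abs_of_pos (inv_pos.2 hε), smul_smul, mul_inv_cancel₀ hε.ne', one_smul]

lemma Phi_bound (φ : ℝ → ℝ) (H : ℝ → ℂ) (S : Set ℝ) (y₀ ε : ℝ) (hε : 0 < ε)
    (c M : ℝ) (hc : 0 < c) (hM0 : 0 ≤ M) (hM : ∀ y ∈ S, ‖H y‖ ≤ M)
    (hlow : ∀ y ∈ S, c * |y - y₀| ≤ |φ y|) (s : ℝ) :
    ‖Phi φ H S y₀ ε s‖ ≤ M / π * (1 + (c * s) ^ 2)⁻¹ := by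
  unfold Phi
  by_cases hs : y₀ + ε * s ∈ S
  · rw [indicator_of_mem hs, norm_smul, norm_smul, Real.norm_of_nonneg hε.le]
    have h1 := hlow _ hs
    have h2 := hM _ hs
    have hd : 0 ≤ deltaE ε (φ (y₀ + ε * s)) := by unfold deltaE; positivity
    rw [Real.norm_of_nonneg hd]
    have h3 : (c * (ε * s)) ^ 2 ≤ (φ (y₀ + ε * s)) ^ 2 := by
      rw [← sq_abs (φ _), ← sq_abs (c * (ε * s)), abs_mul, abs_of_pos hc]
      have : y₀ + ε * s - y₀ = ε * s := by ring
      rw [this] at h1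
      gcongr
    have h4 : deltaE ε (φ (y₀ + ε * s)) ≤ (ε / π) / (ε ^ 2 + (c * (ε * s)) ^ 2) := by
      unfold deltaE; gcongr
    calc _ ≤ ε * ((ε / π) / (ε ^ 2 + (c * (ε * s)) ^ 2) * M) := by gcongr
      _ = _ := by
        have : ε ^ 2 + (c * (ε * s)) ^ 2 = ε ^ 2 * (1 + (c * s) ^ 2) := by ring
        rw [this]
        have : 0 < 1 + (c * s) ^ 2 := by positivity
        field_simp
  · rw [indicator_of_notMem hs]; simp; positivity

lemma J_bound (φ : ℝ → ℝ) (H : ℝ → ℂ) (S : Set ℝ) (hS : MeasurableSet S) (y₀ ε : ℝ) (hε : 0 < ε)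
    (c M : ℝ) (hc : 0 < c) (hM0 : 0 ≤ M) (hM : ∀ y ∈ S, ‖H y‖ ≤ M)
    (hlow : ∀ y ∈ S, c * |y - y₀| ≤ |φ y|) :
    ‖∫ y in S, deltaE ε (φ y) • H y‖ ≤ M / c := by
  rw [← Phi_int φ H S hS y₀ ε hε]
  refine (norm_integral_le_of_norm_le ((int_lor c hc).1.const_mul (M / π))
    (Eventually.of_forall (Phi_bound φ H S y₀ ε hε c M hc hM0 hM hlow))).trans ?_
  rw [integral_const_mul, (int_lor c hc).2]
  apply le_of_eq; field_simp

lemma J_tendsto (φ : ℝ → ℝ) (hφ : Continuous φ) (H : ℝ → ℂ) (hH : Continuous H)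
    (S : Set ℝ) (hS : MeasurableSet S) (y₀ : ℝ) (hSn : S ∈ 𝓝 y₀)
    (c M m : ℝ) (hc : 0 < c) (hM0 : 0 ≤ M) (hM : ∀ y ∈ S, ‖H y‖ ≤ M)
    (hlow : ∀ y ∈ S, c * |y - y₀| ≤ |φ y|) (h0 : φ y₀ = 0) (hm : HasDerivAt φ m y₀) (hm0 : m ≠ 0) :
    Tendsto (fun ε => ∫ y in S, deltaE ε (φ y) • H y) (𝓝[>] 0) (𝓝 ((1 / |m|) • H y₀)) := by
  have hlim : ∫ s : ℝ, ((1 / π) * (1 + (|m| * s) ^ 2)⁻¹) • H y₀ = (1 / |m|) • H y₀ := by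
    rw [integral_smul_const, integral_const_mul, (int_lor |m| (abs_pos.2 hm0)).2]
    congr 1
    have := abs_pos.2 hm0
    field_simp
  rw [← hlim]
  have key : Tendsto (fun ε => ∫ s, Phi φ H S y₀ ε s) (𝓝[>] 0)
      (𝓝 (∫ s : ℝ, ((1 / π) * (1 + (|m| * s) ^ 2)⁻¹) • H y₀)) := by
    refine tendsto_integral_filter_of_dominated_convergence
      (fun s => M / π * (1 + (c * s) ^ 2)⁻¹) ?_ ?_ ((int_lor c hc).1.const_mul (M / π)) ?_
    · refine Eventually.of_forall fun ε => ?_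
      unfold Phi
      refine AEStronglyMeasurable.const_smul ?_ ε
      have h1 : Measurable (S.indicator (fun y => deltaE ε (φ y) • H y)) := by
        refine Measurable.indicator ?_ hS
        have := hφ.measurable
        have := hH.measurable
        unfold deltaE
        fun_prop
      exact (h1.comp (by fun_prop : Measurable fun s : ℝ => y₀ + ε * s)).aestronglyMeasurable
    · filter_upwards [self_mem_nhdsWithin] with ε hε
      exact Eventually.of_forall (Phi_bound φ H S y₀ ε hε c M hc hM0 hM hlow)
    · refine Eventually.of_forall fun s => ?_
      have hc1 : Tendsto (fun ε : ℝ => y₀ + ε * s) (𝓝[>] 0) (𝓝 y₀) := by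
        have : Continuous (fun ε : ℝ => y₀ + ε * s) := by fun_prop
        have := this.tendsto 0
        simp only [zero_mul, add_zero] at this
        exact this.mono_left nhdsWithin_le_nhds
      have hd : HasDerivAt (fun ε : ℝ => φ (y₀ + ε * s)) (m * s) 0 := by
        have h1 : HasDerivAt (fun ε : ℝ => y₀ + ε * s) s 0 := by
          simpa using ((hasDerivAt_id (0:ℝ)).mul_const s).const_add y₀
        have h2 : HasDerivAt φ m (y₀ + 0 * s) := by simpa using hm
        exact h2.comp (0:ℝ) h1
      have hq : Tendsto (fun ε : ℝ => ε⁻¹ * φ (y₀ + ε * s)) (𝓝[>] 0) (𝓝 (m * s)) := by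
        have := hd.tendsto_slope_zero_right
        simpa [h0] using this
      have hlimf : Tendsto (fun ε : ℝ => ((1 / π) * (1 + (ε⁻¹ * φ (y₀ + ε * s)) ^ 2)⁻¹) •
          H (y₀ + ε * s)) (𝓝[>] 0) (𝓝 (((1 / π) * (1 + (|m| * s) ^ 2)⁻¹) • H y₀)) := by
        have e : (|m| * s) ^ 2 = (m * s) ^ 2 := by rw [mul_pow, sq_abs, mul_pow]
        rw [e]
        refine Tendsto.smul (Tendsto.const_mul _ (Tendsto.inv₀ ((hq.pow 2).const_add 1) ?_))
          ((hH.tendsto y₀).comp hc1)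
        positivity
      refine hlimf.congr' ?_
      filter_upwards [self_mem_nhdsWithin, hc1 hSn] with ε hε hεS
      have hε : 0 < ε := hε
      unfold Phi
      rw [indicator_of_mem (show y₀ + ε * s ∈ S from hεS), smul_smul]
      congr 1
      unfold deltaE
      have : 0 < ε ^ 2 + (φ (y₀ + ε * s)) ^ 2 := by positivity
      field_simp
  refine key.congr' ?_
  filter_upwards [self_mem_nhdsWithin] with ε hε
  exact Phi_int φ H S hS y₀ ε hε

lemma slice_facts (a q b σ : ℝ) (ha : 0 < a) (ha2 : a < π / 2) (hq : |q| < Real.cos a)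
    (hσ : |σ| = 1) (φ : ℝ → ℝ)
    (hφ : ∀ θ ∈ Icc (-a) a, φ (b + 2 * θ) = σ * (2 * Real.cos a * (Real.sin θ - Real.tan a * q)))
    (θ₀ : ℝ) (hθ₀ : θ₀ = Real.arcsin (Real.tan a * q)) :
    0 < Real.cos a * Real.cos θ₀ ∧ Real.sin θ₀ = Real.tan a * q ∧
    Icc (b - 2 * a) (b + 2 * a) ∈ 𝓝 (b + 2 * θ₀) ∧
    (∀ y ∈ Icc (b - 2 * a) (b + 2 * a),
      (Real.cos a * Real.cos θ₀ / π) * |y - (b + 2 * θ₀)| ≤ |φ y|) ∧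
    φ (b + 2 * θ₀) = 0 ∧ HasDerivAt φ (σ * (Real.cos a * Real.cos θ₀)) (b + 2 * θ₀) := by
  have hca : 0 < Real.cos a := Real.cos_pos_of_mem_Ioo ⟨by linarith, ha2⟩
  have hsa : 0 < Real.sin a := Real.sin_pos_of_pos_of_lt_pi ha (by linarith)
  have hta : 0 < Real.tan a := Real.tan_pos_of_pos_of_lt_pi_div_two ha ha2
  have htc : Real.tan a * Real.cos a = Real.sin a := Real.tan_mul_cos hca.ne'
  have hlt : |Real.tan a * q| < Real.sin a := by
    rw [abs_mul, abs_of_pos hta, ← htc]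
    gcongr
  have hs1 := Real.sin_le_one a
  obtain ⟨hl1, hl2⟩ := abs_lt.1 hlt
  have hsin : Real.sin θ₀ = Real.tan a * q := by
    rw [hθ₀, Real.sin_arcsin (by linarith) (by linarith)]
  have hm1 : θ₀ < a := by
    rw [hθ₀]
    exact (Real.arcsin_lt_iff_lt_sin' ⟨by linarith, by linarith⟩).2 hl2
  have hm2 : -a < θ₀ := by
    rw [hθ₀]
    refine (Real.lt_arcsin_iff_sin_lt' ⟨by linarith, by linarith⟩).2 ?_
    rw [Real.sin_neg]; exact hl1
  have hcθ : 0 < Real.cos θ₀ := Real.cos_pos_of_mem_Ioo ⟨by linarith, by linarith⟩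
  have hnh : Icc (b - 2 * a) (b + 2 * a) ∈ 𝓝 (b + 2 * θ₀) :=
    Icc_mem_nhds (by linarith) (by linarith)
  refine ⟨by positivity, hsin, hnh, ?_, ?_, ?_⟩
  · intro y hy
    obtain ⟨θ, rfl⟩ : ∃ θ, y = b + 2 * θ := ⟨(y - b) / 2, by ring⟩
    have h1 : -a ≤ θ := by linarith [hy.1]
    have h2 : θ ≤ a := by linarith [hy.2]
    rw [hφ θ ⟨h1, h2⟩, ← hsin, abs_mul, hσ, one_mul, abs_mul, abs_of_pos (by positivity : 0 < 2 * Real.cos a)]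
    have e : Real.sin θ - Real.sin θ₀ = 2 * Real.sin ((θ - θ₀) / 2) * Real.cos ((θ + θ₀) / 2) :=
      Real.sin_sub_sin θ θ₀
    have hcc : Real.cos θ₀ ≤ 2 * Real.cos ((θ + θ₀) / 2) := by
      have h3 : Real.cos θ + Real.cos θ₀ = 2 * Real.cos ((θ + θ₀) / 2) * Real.cos ((θ - θ₀) / 2) :=
        Real.cos_add_cos θ θ₀
      have h4 : 0 ≤ Real.cos θ := Real.cos_nonneg_of_mem_Icc ⟨by linarith, by linarith⟩
      have h5 : 0 ≤ Real.cos ((θ + θ₀) / 2) :=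
        Real.cos_nonneg_of_mem_Icc ⟨by linarith, by linarith⟩
      have h6 := Real.cos_le_one ((θ - θ₀) / 2)
      nlinarith
    have hss : |θ - θ₀| / π ≤ |Real.sin ((θ - θ₀) / 2)| := by
      have := Real.mul_abs_le_abs_sin (x := (θ - θ₀) / 2) (by
        rw [abs_le]; constructor <;> linarith)
      refine le_trans (le_of_eq ?_) this
      rw [abs_div, abs_two]; field_simp
    have e2 : |b + 2 * θ - (b + 2 * θ₀)| = 2 * |θ - θ₀| := by
      rw [show b + 2 * θ - (b + 2 * θ₀) = 2 * (θ - θ₀) by ring, abs_mul, abs_two]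
    rw [e, e2, abs_mul, abs_mul, abs_two]
    have h7 : Real.cos θ₀ ≤ 2 * |Real.cos ((θ + θ₀) / 2)| := by
      have := le_abs_self (Real.cos ((θ + θ₀) / 2)); linarith
    calc Real.cos a * Real.cos θ₀ / π * (2 * |θ - θ₀|)
        = 2 * Real.cos a * (|θ - θ₀| / π * Real.cos θ₀) := by ring
      _ ≤ 2 * Real.cos a * (|Real.sin ((θ - θ₀) / 2)| * (2 * |Real.cos ((θ + θ₀) / 2)|)) := by
        gcongr
      _ = _ := by ring
  · rw [hφ θ₀ ⟨hm2.le, hm1.le⟩, hsin]; ring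
  · have h1 : HasDerivAt (fun y : ℝ => σ * (2 * Real.cos a * (Real.sin ((y - b) / 2) - Real.tan a * q)))
        (σ * (Real.cos a * Real.cos θ₀)) (b + 2 * θ₀) := by
      have h2 : HasDerivAt (fun y : ℝ => (y - b) / 2) (1 / 2) (b + 2 * θ₀) :=
        ((hasDerivAt_id _).sub_const b).div_const 2
      have h3 := (((h2.sin).sub_const (Real.tan a * q)).const_mul (2 * Real.cos a)).const_mul σ
      rw [show (b + 2 * θ₀ - b) / 2 = θ₀ by ring] at h3
      rw [show σ * (Real.cos a * Real.cos θ₀) = σ * (2 * Real.cos a * (Real.cos θ₀ * (1 / 2))) by ring]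
      exact h3
    refine h1.congr_of_eventuallyEq ?_
    filter_upwards [hnh] with y hy
    have := hφ ((y - b) / 2) ⟨by linarith [hy.1], by linarith [hy.2]⟩
    rw [← this]; congr 1; ring

/-- the slice of `Uminus` -/
def Sl (x z : ℝ) : Set ℝ := {y | (x, y, z) ∈ Uminus}

lemma omega_eq {x : ℝ} (h0 : 0 ≤ x) (h1 : x ≤ 2 * π) : omg x = Real.sin (x / 2) := by
  unfold omg
  exact abs_of_nonneg (Real.sin_nonneg_of_nonneg_of_le_pi (by linarith) (by linarith))

lemma Omg_eq {x y z : ℝ} (h : (x, y, z) ∈ Uminus) :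
    Omg x y z = Real.sin (x / 2) + Real.sin (y / 2) - Real.sin (z / 2) + Real.sin ((x + y - z) / 2) := by
  obtain ⟨hx, hy, hz, h⟩ := h
  simp only at hx hy hz h
  have e : omg (x + y - z) = - Real.sin ((x + y - z) / 2) := by
    unfold omg
    apply abs_of_nonpos
    rcases h with h | h
    · apply Real.sin_nonpos_of_nonpos_of_neg_pi_le
      · linarith
      · linarith [hx.1, hy.1, hz.2]
    · rw [← neg_nonneg, ← Real.sin_sub_pi]
      apply Real.sin_nonneg_of_nonneg_of_le_pi
      · linarith
      · linarith [hx.2, hy.2, hz.1]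
  unfold Omg
  rw [e, omega_eq hx.1 hx.2, omega_eq hy.1 hy.2, omega_eq hz.1 hz.2]
  ring

lemma trig1 (x y z : ℝ) : Real.sin (x / 2) + Real.sin (y / 2) - Real.sin (z / 2) + Real.sin ((x + y - z) / 2)
    = 2 * Real.cos ((z - x) / 4) * Real.sin ((2 * y + x - z) / 4)
      - 2 * Real.sin ((z - x) / 4) * Real.cos ((x + z) / 4) := by
  have h1 := Real.sin_sub_sin (x / 2) (z / 2)
  have h2 := Real.sin_add_sin (y / 2) ((x + y - z) / 2)
  rw [show (x / 2 - z / 2) / 2 = - ((z - x) / 4) by ring, show (x / 2 + z / 2) / 2 = (x + z) / 4 by ring,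
    Real.sin_neg] at h1
  rw [show (y / 2 - (x + y - z) / 2) / 2 = (z - x) / 4 by ring,
    show (y / 2 + (x + y - z) / 2) / 2 = (2 * y + x - z) / 4 by ring] at h2
  linear_combination h1 + h2

lemma Fp_eq (x z : ℝ) : Fp x z = 4 * (Real.cos ((z - x) / 4) ^ 2
    - Real.sin ((z - x) / 4) ^ 2 * Real.cos ((x + z) / 4) ^ 2) := by
  unfold Fp
  obtain ⟨u, rfl⟩ : ∃ u, x = 4 * u := ⟨x / 4, by ring⟩
  obtain ⟨v, rfl⟩ : ∃ v, z = 4 * v := ⟨z / 4, by ring⟩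
  rw [show 4 * u / 2 = 2 * u by ring, show 4 * v / 2 = 2 * v by ring,
    show (4 * v - 4 * u) / 4 = v - u by ring, show (4 * u + 4 * v) / 4 = u + v by ring,
    Real.cos_two_mul, Real.cos_two_mul, Real.sin_two_mul, Real.sin_two_mul, Real.cos_sub, Real.sin_sub,
    Real.cos_add]
  have hu := Real.sin_sq_add_cos_sq u
  have hv := Real.sin_sq_add_cos_sq v
  generalize Real.sin u = a at *
  generalize Real.cos u = b at *
  generalize Real.sin v = c at *
  generalize Real.cos v = d at *
  have hb : b ^ 2 = 1 - a ^ 2 := by linarith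
  have hd : d ^ 2 = 1 - c ^ 2 := by linarith
  grind

lemma cos_lt {x z : ℝ} (hx : x ∈ Ioo 0 (2 * π)) (hz : z ∈ Ioo 0 (2 * π)) :
    |Real.cos ((x + z) / 4)| < Real.cos ((z - x) / 4) := by
  obtain ⟨hx0, hx1⟩ := hx
  obtain ⟨hz0, hz1⟩ := hz
  have a1 : 0 < Real.sin (x / 4) := Real.sin_pos_of_pos_of_lt_pi (by linarith) (by linarith)
  have a2 : 0 < Real.sin (z / 4) := Real.sin_pos_of_pos_of_lt_pi (by linarith) (by linarith)
  have a3 : 0 < Real.cos (x / 4) := Real.cos_pos_of_mem_Ioo ⟨by linarith, by linarith⟩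
  have a4 : 0 < Real.cos (z / 4) := Real.cos_pos_of_mem_Ioo ⟨by linarith, by linarith⟩
  rw [show (x + z) / 4 = x / 4 + z / 4 by ring, show (z - x) / 4 = z / 4 - x / 4 by ring,
    Real.cos_add, Real.cos_sub, abs_lt]
  have := mul_pos a1 a2
  have := mul_pos a3 a4
  constructor <;> nlinarith

/-- Main facts on each slice. -/
lemma slice_main {x z : ℝ} (hx : x ∈ Ioo 0 (2 * π)) (hz : z ∈ Ioo 0 (2 * π)) (hxz : x ≠ z) :
    ∃ y₀ m : ℝ, (y₀ = h0 x z ∨ y₀ = h0 x z + 2 * π) ∧ |m| = Real.sqrt (Fp x z) / 2 ∧ 0 < |m| ∧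
      Sl x z ∈ 𝓝 y₀ ∧ (∀ y ∈ Sl x z, (|m| / π) * |y - y₀| ≤ |Omg x y z|) ∧
      Omg x y₀ z = 0 ∧ HasDerivAt (fun y => Omg x y z) m y₀ := by
  have hcl := cos_lt hx hz
  obtain ⟨hx0, hx1⟩ := hx
  obtain ⟨hz0, hz1⟩ := hz
  have hFp : ∀ a θ₀ : ℝ, (a = (z - x) / 4 ∨ a = - ((z - x) / 4)) → 0 < Real.cos a →
      0 < Real.cos a * Real.cos θ₀ →
      Real.sin θ₀ = Real.tan a * Real.cos ((x + z) / 4) →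
      Real.cos a * Real.cos θ₀ = Real.sqrt (Fp x z) / 2 := by
    intro a θ₀ ha hca hpos hs
    have htc : Real.tan a * Real.cos a = Real.sin a := Real.tan_mul_cos hca.ne'
    have : Fp x z = (2 * (Real.cos a * Real.cos θ₀)) ^ 2 := by
      have h1 : Fp x z = 4 * (Real.cos a ^ 2 - Real.sin a ^ 2 * Real.cos ((x + z) / 4) ^ 2) := by
        rw [Fp_eq]
        rcases ha with rfl | rfl
        · rfl
        · rw [Real.cos_neg, Real.sin_neg]; ring
      have h2 := Real.sin_sq_add_cos_sq θ₀
      rw [h1, ← htc]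
      have h3 : Real.cos θ₀ ^ 2 = 1 - (Real.tan a * Real.cos ((x + z) / 4)) ^ 2 := by rw [← hs]; linarith
      linear_combination (-4 * Real.cos a ^ 2) * h3
    rw [this, Real.sqrt_sq (by positivity)]; ring
  rcases lt_or_gt_of_ne hxz with hlt | hlt
  · have hS : Sl x z = Icc ((z - x) / 2 - 2 * ((z - x) / 4)) ((z - x) / 2 + 2 * ((z - x) / 4)) := by
      ext y
      simp only [Sl, Uminus, mem_ofPred_eq, mem_Icc]
      constructor
      · rintro ⟨h1, h2, h3, h4 | h4⟩ <;> constructor <;> linarith [h2.1, h2.2]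
      · rintro ⟨h1, h2⟩
        exact ⟨⟨by linarith, by linarith⟩, ⟨by linarith, by linarith⟩, ⟨by linarith, by linarith⟩,
          Or.inl (by linarith)⟩
    have ha : 0 < (z - x) / 4 := by linarith
    have ha2 : (z - x) / 4 < π / 2 := by linarith
    have hca : 0 < Real.cos ((z - x) / 4) := Real.cos_pos_of_mem_Ioo ⟨by linarith, ha2⟩
    obtain ⟨f1, f2, f3, f4, f5, f6⟩ := slice_facts ((z - x) / 4) (Real.cos ((x + z) / 4)) ((z - x) / 2) 1
      ha ha2 hcl (by simp) (fun y => Omg x y z) (by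
        intro θ hθ
        have hmem : (z - x) / 2 + 2 * θ ∈ Sl x z := by
          rw [hS]; exact ⟨by linarith [hθ.1], by linarith [hθ.2]⟩
        have htc := Real.tan_mul_cos hca.ne'
        rw [Omg_eq hmem, trig1, ← htc,
          show (2 * ((z - x) / 2 + 2 * θ) + x - z) / 4 = θ by ring]
        ring) _ rfl
    have hm := hFp _ _ (Or.inl rfl) hca f1 f2
    rw [← hS] at f3 f4
    rw [one_mul] at f6
    refine ⟨_, _, Or.inl ?_, ?_, ?_, f3, ?_, f5, f6⟩
    · unfold h0; rw [abs_of_pos (by linarith)]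
    · rw [abs_of_pos f1, hm]
    · rw [abs_of_pos f1]; exact f1
    · rw [abs_of_pos f1]; exact f4
  · have hS : Sl x z = Icc (2 * π + (z - x) / 2 - 2 * ((x - z) / 4)) (2 * π + (z - x) / 2 + 2 * ((x - z) / 4)) := by
      ext y
      simp only [Sl, Uminus, mem_ofPred_eq, mem_Icc]
      constructor
      · rintro ⟨h1, h2, h3, h4 | h4⟩ <;> constructor <;> linarith [h2.1, h2.2]
      · rintro ⟨h1, h2⟩
        exact ⟨⟨by linarith, by linarith⟩, ⟨by linarith, by linarith⟩, ⟨by linarith, by linarith⟩,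
          Or.inr (by linarith)⟩
    have ha : 0 < (x - z) / 4 := by linarith
    have ha2 : (x - z) / 4 < π / 2 := by linarith
    have hca : 0 < Real.cos ((x - z) / 4) := Real.cos_pos_of_mem_Ioo ⟨by linarith, ha2⟩
    have hneg : (x - z) / 4 = - ((z - x) / 4) := by ring
    have hcos : Real.cos ((z - x) / 4) = Real.cos ((x - z) / 4) := by rw [hneg, Real.cos_neg]
    have hsin : Real.sin ((z - x) / 4) = - Real.sin ((x - z) / 4) := by rw [hneg, Real.sin_neg, neg_neg]
    obtain ⟨f1, f2, f3, f4, f5, f6⟩ := slice_facts ((x - z) / 4) (Real.cos ((x + z) / 4))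
      (2 * π + (z - x) / 2) (-1)
      ha ha2 (by rw [← hcos]; exact hcl) (by simp) (fun y => Omg x y z) (by
        intro θ hθ
        have hmem : 2 * π + (z - x) / 2 + 2 * θ ∈ Sl x z := by
          rw [hS]; exact ⟨by linarith [hθ.1], by linarith [hθ.2]⟩
        have htc := Real.tan_mul_cos hca.ne'
        rw [Omg_eq hmem, trig1, hcos, hsin, ← htc,
          show (2 * (2 * π + (z - x) / 2 + 2 * θ) + x - z) / 4 = θ + π by ring, Real.sin_add_pi]
        ring) _ rfl
    have hm := hFp _ _ (Or.inr hneg) hca f1 f2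
    rw [← hS] at f3 f4
    have hab : ∀ r : ℝ, 0 < r → |(-1) * r| = r := fun r hr => by
      rw [abs_mul, abs_neg, abs_one, one_mul, abs_of_pos hr]
    refine ⟨_, _, Or.inr ?_, ?_, ?_, f3, ?_, f5, f6⟩
    · unfold h0
      rw [show |z - x| = x - z by rw [abs_of_neg (by linarith)]; ring]; ring
    · rw [hab _ f1, hm]
    · rw [hab _ f1]; exact f1
    · rw [hab _ f1]; exact f4

lemma Omg_cont : Continuous fun p : ℝ × ℝ × ℝ => Omg p.1 p.2.1 p.2.2 := by
  unfold Omg omg; fun_prop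

lemma Uminus_closed : IsClosed Uminus := by
  have : Uminus = (Icc 0 (2 * π) ×ˢ (Icc 0 (2 * π) ×ˢ Icc 0 (2 * π))) ∩
    ({p : ℝ × ℝ × ℝ | p.1 + p.2.1 ≤ p.2.2} ∪ {p : ℝ × ℝ × ℝ | p.2.2 ≤ p.1 + p.2.1 - 2 * π}) := by
    ext p; simp only [Uminus, mem_ofPred_eq, mem_inter_iff, mem_prod, mem_union]; tauto
  rw [this]
  refine (isClosed_Icc.prod (isClosed_Icc.prod isClosed_Icc)).inter (IsClosed.union ?_ ?_)
  · exact isClosed_le (by fun_prop) (by fun_prop)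
  · exact isClosed_le (by fun_prop) (by fun_prop)

lemma Uminus_compact : IsCompact Uminus := by
  refine (isCompact_Icc.prod (isCompact_Icc.prod isCompact_Icc) :
    IsCompact (Icc (0:ℝ) (2 * π) ×ˢ (Icc (0:ℝ) (2 * π) ×ˢ Icc (0:ℝ) (2 * π)))).of_isClosed_subset Uminus_closed ?_
  rintro p ⟨h1, h2, h3, -⟩
  exact ⟨h1, h2, h3⟩

lemma Sl_meas (x z : ℝ) : MeasurableSet (Sl x z) :=
  (Uminus_closed.preimage (by fun_prop : Continuous fun y : ℝ => (x, y, z))).measurableSet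

lemma sin_int : IntegrableOn (fun x : ℝ => 1 / Real.sqrt (Real.sin (x / 2))) (Ioo 0 (2 * π)) := by
  have hI : IntervalIntegrable (fun x : ℝ => x ^ (-(1/2) : ℝ)) volume 0 (2 * π) :=
    intervalIntegral.intervalIntegrable_rpow' (by norm_num)
  have hI2 : IntervalIntegrable (fun x : ℝ => (2 * π - x) ^ (-(1/2) : ℝ)) volume 0 (2 * π) := by
    have := hI.comp_sub_left (2 * π)
    simp only [sub_zero, sub_self] at this
    exact this.symm
  have hs := ((hI.add hI2).const_mul (Real.sqrt π))
  rw [intervalIntegrable_iff_integrableOn_Ioo_of_le (by positivity)] at hs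
  refine Integrable.mono' hs (Measurable.aestronglyMeasurable (by fun_prop)) ?_
  rw [ae_restrict_iff' measurableSet_Ioo]
  refine Eventually.of_forall fun x hx => ?_
  obtain ⟨h0, h1⟩ := hx
  rw [Real.norm_of_nonneg (by positivity)]
  have aux : ∀ t : ℝ, 0 < t → t ≤ π → Real.sin (t / 2) = Real.sin (x / 2) →
      1 / Real.sqrt (Real.sin (x / 2)) ≤ Real.sqrt π * t ^ (-(1/2) : ℝ) := by
    intro t ht ht2 e
    have hj : t / π ≤ Real.sin (x / 2) := by
      rw [← e]
      have := Real.mul_le_sin (x := t / 2) (by linarith) (by linarith)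
      refine le_trans (le_of_eq ?_) this
      field_simp
    have : Real.sqrt (t / π) ≤ Real.sqrt (Real.sin (x / 2)) := Real.sqrt_le_sqrt hj
    have hp : 0 < Real.sqrt (t / π) := Real.sqrt_pos.2 (by positivity)
    calc _ ≤ 1 / Real.sqrt (t / π) := by gcongr
      _ = _ := by
        rw [Real.rpow_neg ht.le, ← Real.sqrt_eq_rpow, Real.sqrt_div ht.le]
        field_simp
  have p1 : 0 ≤ x ^ (-(1/2) : ℝ) := Real.rpow_nonneg h0.le _
  have p2 : 0 ≤ (2 * π - x) ^ (-(1/2) : ℝ) := Real.rpow_nonneg (by linarith) _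
  have p3 := Real.sqrt_nonneg π
  rw [mul_add]
  rcases le_total x π with h | h
  · have := aux x h0 h rfl
    nlinarith [mul_nonneg p3 p2]
  · have := aux (2 * π - x) (by linarith) (by linarith) (by
      rw [show (2 * π - x) / 2 = π - x / 2 by ring, Real.sin_pi_sub])
    nlinarith [mul_nonneg p3 p1]

/-- the inner integral -/
def JJ (G : ℝ → ℝ → ℝ → ℂ) (ε : ℝ) (q : ℝ × ℝ) : ℂ :=
  ∫ y in Sl q.1 q.2, deltaE ε (Omg q.1 y q.2) • G q.1 y q.2

lemma ae_ne : ∀ᵐ q : ℝ × ℝ, q.1 ≠ q.2 := by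
  have hm : MeasurableSet {q : ℝ × ℝ | q.1 ≠ q.2} :=
    (measurableSet_eq_fun measurable_fst measurable_snd).compl
  rw [Measure.volume_eq_prod, Measure.ae_prod_iff_ae_ae hm]
  refine Eventually.of_forall fun x => ?_
  have : ∀ᵐ y : ℝ, y ≠ x := by
    rw [ae_iff]; simp
  filter_upwards [this] with y hy using hy.symm

lemma fubini (G : ℝ → ℝ → ℝ → ℂ)
    (hcont : Continuous fun p : ℝ × ℝ × ℝ => G p.1 p.2.1 p.2.2) (ε : ℝ) (hε : 0 < ε) :
    Integrable (JJ G ε) ∧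
    ∫ p in Uminus, (deltaE ε (Omg p.1 p.2.1 p.2.2) : ℝ) • G p.1 p.2.1 p.2.2 = ∫ q, JJ G ε q := by
  set g : ℝ × ℝ × ℝ → ℂ := Uminus.indicator
    (fun p => (deltaE ε (Omg p.1 p.2.1 p.2.2) : ℝ) • G p.1 p.2.1 p.2.2) with hg
  have hc : Continuous (fun p : ℝ × ℝ × ℝ => (deltaE ε (Omg p.1 p.2.1 p.2.2) : ℝ) • G p.1 p.2.1 p.2.2) := by
    suffices hd : Continuous (fun p : ℝ × ℝ × ℝ => deltaE ε (Omg p.1 p.2.1 p.2.2)) from hd.smul hcont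
    unfold deltaE
    refine Continuous.div continuous_const (continuous_const.add (Omg_cont.pow 2)) ?_
    intro p
    positivity
  have hgi : Integrable g := by
    rw [hg, integrable_indicator_iff Uminus_closed.measurableSet]
    exact hc.continuousOn.integrableOn_compact Uminus_compact
  let e : (ℝ × ℝ) × ℝ → ℝ × ℝ × ℝ := fun r => (r.1.1, r.2, r.1.2)
  have he : MeasurePreserving e := by
    have h1 : MeasurePreserving (MeasurableEquiv.prodAssoc : (ℝ × ℝ) × ℝ ≃ᵐ ℝ × ℝ × ℝ) :=
      volume_preserving_prodAssoc
    have h2 : MeasurePreserving (Prod.map id Prod.swap : ℝ × ℝ × ℝ → ℝ × ℝ × ℝ) :=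
      (MeasurePreserving.id (volume : Measure ℝ)).prod
        (Measure.measurePreserving_swap (μ := (volume : Measure ℝ)) (ν := (volume : Measure ℝ)))
    exact h2.comp h1
  have hemb : MeasurableEmbedding e := by
    have h2 : MeasurableEmbedding ((MeasurableEquiv.refl ℝ).prodCongr (MeasurableEquiv.prodComm (α := ℝ) (β := ℝ))) :=
      MeasurableEquiv.measurableEmbedding _
    exact h2.comp (MeasurableEquiv.prodAssoc : (ℝ × ℝ) × ℝ ≃ᵐ ℝ × ℝ × ℝ).measurableEmbedding
  have hint : Integrable (g ∘ e) := (he.integrable_comp_emb hemb).2 hgi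
  have hJ : ∀ q : ℝ × ℝ, ∫ y, (g ∘ e) (q, y) = JJ G ε q := by
    intro q
    unfold JJ
    rw [← integral_indicator (Sl_meas _ _)]
    rfl
  have hint' := hint
  rw [Measure.volume_eq_prod] at hint'
  constructor
  · have := hint'.integral_prod_left
    simpa only [hJ] using this
  · rw [← integral_indicator Uminus_closed.measurableSet, ← he.integral_comp hemb]
    have := integral_prod (g ∘ e) hint'
    simp only [hJ] at this
    exact this

lemma box_ae : ((II ×ˢ II : Set (ℝ × ℝ)) =ᵐ[volume] (Ioo 0 (2 * π) ×ˢ Ioo 0 (2 * π) : Set (ℝ × ℝ))) ∧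
    ((Icc 0 (2 * π) ×ˢ Icc 0 (2 * π) : Set (ℝ × ℝ)) =ᵐ[volume] (Ioo 0 (2 * π) ×ˢ Ioo 0 (2 * π) : Set (ℝ × ℝ))) := by
  constructor
  · exact Measure.set_prod_ae_eq Ioo_ae_eq_Ico.symm Ioo_ae_eq_Ico.symm
  · exact Measure.set_prod_ae_eq Ioo_ae_eq_Icc.symm Ioo_ae_eq_Icc.symm

lemma mod_eq {x : ℝ} (hx : x ∈ Ioo 0 (2 * π)) : mod2pi x = x := by
  unfold mod2pi
  have : ⌊x / (2 * π)⌋ = 0 := by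
    rw [Int.floor_eq_zero_iff]
    exact ⟨by have := hx.1; positivity, by rw [div_lt_one (by positivity)]; exact hx.2⟩
  rw [this]; simp


lemma JJ_tendsto (G : ℝ → ℝ → ℝ → ℂ)
    (hcont : Continuous fun p : ℝ × ℝ × ℝ => G p.1 p.2.1 p.2.2)
    (hper2 : ∀ x y z : ℝ, G x (y + 2 * π) z = G x y z) (M : ℝ) (hM0 : 0 ≤ M)
    (hM : ∀ p ∈ Uminus, ‖G p.1 p.2.1 p.2.2‖ ≤ M) (x z : ℝ)
    (hx : x ∈ Ioo 0 (2 * π)) (hz : z ∈ Ioo 0 (2 * π)) (hne : x ≠ z) :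
    Tendsto (fun ε => JJ G ε (x, z)) (𝓝[>] 0)
      (𝓝 ((2 / Real.sqrt (Fp x z) : ℝ) • G x (hFPU x z) z)) := by
  obtain ⟨y₀, m, hy, hm, hmpos, hnh, hlow, hzero, hder⟩ := slice_main hx hz hne
  have hGy : G x (hFPU x z) z = G x y₀ z := by
    have : hFPU x z = h0 x z := by
      unfold hFPU; rw [mod_eq hx, mod_eq hz]; ring
    rw [this]
    rcases hy with hy | hy
    · rw [hy]
    · rw [hy, hper2]
  have hco : 2 / Real.sqrt (Fp x z) = 1 / |m| := by
    rw [hm, one_div_div]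
  rw [hGy, hco]
  have c1 : Continuous fun y => Omg x y z := by unfold Omg omg; fun_prop
  have c2 : Continuous fun y => G x y z :=
    hcont.comp (by fun_prop : Continuous fun y : ℝ => (x, y, z))
  exact J_tendsto (fun y => Omg x y z) c1 (fun y => G x y z) c2 (Sl x z) (Sl_meas _ _) y₀
    hnh (|m| / π) M m (by positivity) hM0 (fun y hy => hM (x, y, z) hy) hlow hzero hder (abs_pos.1 hmpos)

/-- **Lemma 3.3.**  For a continuous, `2π`-periodic `G : ℝ³ → ℂ`,
`∫_{U₋} δ_ε(Ω(x,y,z)) G(x,y,z) dx dy dz → ∫_{I²} (2/√(F₊(x,z))) G(x, h(x,z), z) dx dz`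
as `ε → 0⁺`. -/
theorem delta_limit_on_Uminus
    (G : ℝ → ℝ → ℝ → ℂ)
    (hcont : Continuous fun p : ℝ × ℝ × ℝ => G p.1 p.2.1 p.2.2)
    (hper1 : ∀ x y z : ℝ, G (x + 2 * π) y z = G x y z)
    (hper2 : ∀ x y z : ℝ, G x (y + 2 * π) z = G x y z)
    (hper3 : ∀ x y z : ℝ, G x y (z + 2 * π) = G x y z) :
    Tendsto
      (fun ε : ℝ =>
        ∫ p in Uminus, (deltaE ε (Omg p.1 p.2.1 p.2.2) : ℝ) • G p.1 p.2.1 p.2.2)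
      (𝓝[>] (0 : ℝ))
      (𝓝 (∫ p in II ×ˢ II, (2 / Real.sqrt (Fp p.1 p.2) : ℝ) • G p.1 (hFPU p.1 p.2) p.2)) := by
  have hM : ∃ M : ℝ, 0 ≤ M ∧ ∀ p ∈ Uminus, ‖G p.1 p.2.1 p.2.2‖ ≤ M := by
    obtain ⟨M, hM⟩ := Uminus_compact.exists_bound_of_continuousOn hcont.continuousOn
    exact ⟨max M 0, le_max_right _ _, fun p hp => (hM p hp).trans (le_max_left _ _)⟩
  obtain ⟨M, hM0, hM⟩ := hM
  rw [setIntegral_congr_set box_ae.1]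
  have hD : MeasurableSet (Ioo 0 (2 * π) ×ˢ Ioo 0 (2 * π) : Set (ℝ × ℝ)) :=
    measurableSet_Ioo.prod measurableSet_Ioo
  have main : Tendsto (fun ε : ℝ => ∫ q in Ioo 0 (2 * π) ×ˢ Ioo 0 (2 * π), JJ G ε q) (𝓝[>] (0 : ℝ))
      (𝓝 (∫ p in Ioo 0 (2 * π) ×ˢ Ioo 0 (2 * π),
        (2 / Real.sqrt (Fp p.1 p.2) : ℝ) • G p.1 (hFPU p.1 p.2) p.2)) := by
    refine tendsto_integral_filter_of_dominated_convergence
      (fun q => (M * π) * ((1 / Real.sqrt (Real.sin (q.1 / 2))) * (1 / Real.sqrt (Real.sin (q.2 / 2)))))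
      ?_ ?_ ?_ ?_
    · filter_upwards [self_mem_nhdsWithin] with ε hε
      exact (fubini G hcont ε hε).1.aestronglyMeasurable.restrict
    · filter_upwards [self_mem_nhdsWithin] with ε hε
      rw [ae_restrict_iff' hD]
      filter_upwards [ae_ne] with q hne hq
      obtain ⟨y₀, m, -, hm, hmpos, -, hlow, -, -⟩ := slice_main hq.1 hq.2 hne
      refine (J_bound (fun y => Omg q.1 y q.2) (fun y => G q.1 y q.2) (Sl q.1 q.2) (Sl_meas _ _) y₀ ε hε
        (|m| / π) M (by positivity) hM0 (fun y hy => hM _ hy) hlow).trans ?_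
      have s1 : 0 < Real.sin (q.1 / 2) :=
        Real.sin_pos_of_pos_of_lt_pi (by linarith [hq.1.1]) (by linarith [hq.1.2])
      have s2 : 0 < Real.sin (q.2 / 2) :=
        Real.sin_pos_of_pos_of_lt_pi (by linarith [hq.2.1]) (by linarith [hq.2.2])
      have hle : Real.sqrt (Real.sin (q.1 / 2)) * Real.sqrt (Real.sin (q.2 / 2)) ≤ |m| := by
        rw [hm, ← Real.sqrt_mul s1.le, le_div_iff₀ two_pos]
        apply Real.le_sqrt_of_sq_le
        rw [mul_pow, Real.sq_sqrt (by positivity)]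
        unfold Fp
        nlinarith [sq_nonneg (Real.cos (q.1 / 2) + Real.cos (q.2 / 2))]
      have r1 := Real.sqrt_pos.2 s1
      have r2 := Real.sqrt_pos.2 s2
      calc M / (|m| / π) = (M * π) / |m| := by field_simp
        _ ≤ (M * π) / (Real.sqrt (Real.sin (q.1 / 2)) * Real.sqrt (Real.sin (q.2 / 2))) := by gcongr
        _ = _ := by field_simp
    · refine Integrable.const_mul ?_ _
      rw [Measure.volume_eq_prod, ← Measure.prod_restrict]
      exact Integrable.mul_prod sin_int sin_int
    · rw [ae_restrict_iff' hD]
      filter_upwards [ae_ne] with q hne hq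
      exact JJ_tendsto G hcont hper2 M hM0 hM q.1 q.2 hq.1 hq.2 hne
  refine main.congr' ?_
  filter_upwards [self_mem_nhdsWithin] with ε hε
  rw [(fubini G hcont ε hε).2, ← setIntegral_congr_set box_ae.2]
  refine setIntegral_eq_integral_of_forall_compl_eq_zero fun q hq => ?_
  have : Sl q.1 q.2 = ∅ := by
    ext y
    simp only [mem_empty_iff_false, iff_false]
    rintro ⟨h1, -, h3, -⟩
    exact hq ⟨h1, h3⟩
  unfold JJ
  rw [this]; simp
end
end

section
/- Let G be a measurable, 2π-periodic (in each variable) function on ℝ². Then ∫_{I²} (1/√(F₊(x,z))) · G(x, h(x,z)) dx dz = ∫_{I²} 2 · 𝟙(F₋(x,y) > 0)/√(F₋(x,y)) · G(x,y) dx dy, provided either G ≥ 0 or one of the two integrals is absolutely convergent. -/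
open MeasureTheory Real Set Filter
open scoped Topology ENNReal ComplexConjugate

noncomputable section

lemma sin_cos_half (u v : ℝ) : Real.sin u * Real.cos v = (Real.sin (u + v) + Real.sin (u - v)) / 2 := by
  rw [Real.sin_add, Real.sin_sub]; ring

lemma cos_cos_half (u v : ℝ) : Real.cos u * Real.cos v = (Real.cos (u + v) + Real.cos (u - v)) / 2 := by
  rw [Real.cos_add, Real.cos_sub]; ring

/-- the two forms of the resonance relation -/
lemma res_iff (a b c : ℝ) :
    Real.sin (c - (a + b) / 2) * Real.cos ((a + b) / 2)
        = Real.sin ((a + b) / 2) * Real.cos ((a - b) / 2) ↔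
      Real.sin ((c - a) / 2) * Real.cos ((a + c) / 2)
        = Real.sin (b - (c - a) / 2) * Real.cos ((c - a) / 2) := by
  rw [sin_cos_half, sin_cos_half, sin_cos_half, sin_cos_half]
  have e1 : c - (a + b) / 2 + (a + b) / 2 = c := by ring
  have e2 : c - (a + b) / 2 - (a + b) / 2 = -(a + b - c) := by ring
  have e3 : (a + b) / 2 + (a - b) / 2 = a := by ring
  have e4 : (a + b) / 2 - (a - b) / 2 = b := by ring
  have e5 : (c - a) / 2 + (a + c) / 2 = c := by ring
  have e6 : (c - a) / 2 - (a + c) / 2 = -a := by ring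
  have e7 : b - (c - a) / 2 + (c - a) / 2 = b := by ring
  have e8 : b - (c - a) / 2 - (c - a) / 2 = a + b - c := by ring
  rw [e1, e2, e3, e4, e5, e6, e7, e8, Real.sin_neg, Real.sin_neg]
  constructor <;> intro h <;> linarith

lemma core (a b α : ℝ) (ha : 0 < a) (ha' : a < π) (hb : 0 < b) (hab : a + b < π)
    (hα : 0 < α) (hα' : α < π)
    (hE : Real.sin α * Real.cos ((a + b) / 2) = Real.sin ((a + b) / 2) * Real.cos ((a - b) / 2)) :
    a < (a + b) / 2 + α ∧ (a + b) / 2 + α < π ∧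
      0 < Real.cos (b - ((a + b) / 2 + α - a) / 2) ∧
      |b - ((a + b) / 2 + α - a) / 2| < π / 2 := by
  set s := (a + b) / 2 with hs
  set d := (a - b) / 2 with hd
  have hπ := Real.pi_pos
  have hcs : 0 < Real.cos s := Real.cos_pos_of_mem_Ioo ⟨by linarith, by linarith⟩
  have hss : 0 < Real.sin s := Real.sin_pos_of_pos_of_lt_pi (by linarith) (by linarith)
  have hcd : 0 < Real.cos d := Real.cos_pos_of_mem_Ioo ⟨by linarith, by linarith⟩
  have h1 : a < s + α := by
    by_contra hcon
    have hle : α ≤ d := by linarith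
    have h2 : Real.sin α ≤ Real.sin d :=
      Real.sin_le_sin_of_le_of_le_pi_div_two (by linarith) (by linarith) hle
    have h3 : 0 < Real.sin (s - d) :=
      Real.sin_pos_of_pos_of_lt_pi (by linarith) (by linarith)
    rw [Real.sin_sub] at h3
    nlinarith
  have hcds : Real.cos s < Real.cos d := by
    rw [← Real.cos_abs d]
    apply Real.cos_lt_cos_of_nonneg_of_le_pi (abs_nonneg _) (by linarith)
    rw [abs_lt]; constructor <;> linarith
  have h2 : s + α < π := by
    by_contra hcon
    have hle : π - α ≤ s := by linarith
    have h2 : Real.sin (π - α) ≤ Real.sin s :=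
      Real.sin_le_sin_of_le_of_le_pi_div_two (by linarith) (by linarith) hle
    rw [Real.sin_pi_sub] at h2
    nlinarith
  have hq : 0 < Real.cos ((s + α - a) / 2) :=
    Real.cos_pos_of_mem_Ioo ⟨by linarith, by linarith⟩
  have hlow : -(π / 2) < b - (s + α - a) / 2 := by linarith
  have h4 : b - (s + α - a) / 2 < π / 2 := by
    rcases le_or_gt α (π / 2) with h | h
    · have hca : 0 ≤ Real.cos α := Real.cos_nonneg_of_mem_Icc ⟨by linarith, h⟩
      have hid : 2 * (Real.cos (b - (s + α - a) / 2) * Real.cos ((s + α - a) / 2))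
          = Real.cos (s - d) + Real.cos (s - α) := by
        rw [cos_cos_half]
        have e1 : b - (s + α - a) / 2 + (s + α - a) / 2 = s - d := by rw [hs, hd]; ring
        have e2 : b - (s + α - a) / 2 - (s + α - a) / 2 = s - α := by rw [hs]; ring
        rw [e1, e2]; ring
      have hpos : 0 < (Real.cos (s - d) + Real.cos (s - α)) * Real.cos s := by
        rw [Real.cos_sub, Real.cos_sub]
        have e : (Real.cos s * Real.cos d + Real.sin s * Real.sin d
            + (Real.cos s * Real.cos α + Real.sin s * Real.sin α)) * Real.cos s
            = Real.cos d * (Real.cos s ^ 2 + Real.sin s ^ 2) + Real.sin s * Real.cos s * Real.sin d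
              + Real.cos s ^ 2 * Real.cos α := by
          linear_combination Real.sin s * hE
        rw [e, Real.cos_sq_add_sin_sq]
        have h5 : |Real.sin s * Real.sin d| ≤ 1 := by
          rw [abs_mul]
          exact mul_le_one₀ (Real.abs_sin_le_one _) (abs_nonneg _) (Real.abs_sin_le_one _)
        have h6 := (abs_le.mp h5).1
        have : 0 ≤ Real.cos s ^ 2 * Real.cos α := by positivity
        nlinarith
      have hc : 0 < Real.cos (b - (s + α - a) / 2) := by
        have h7 := pos_of_mul_pos_left hpos hcs.le
        rw [← hid] at h7
        have h8 : 0 < Real.cos (b - (s + α - a) / 2) * Real.cos ((s + α - a) / 2) := by linarith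
        exact pos_of_mul_pos_left h8 hq.le
      by_contra hcon
      have := Real.cos_nonpos_of_pi_div_two_le_of_le (x := b - (s + α - a) / 2) (by linarith)
        (by linarith)
      linarith
    · linarith
  exact ⟨h1, h2, Real.cos_pos_of_mem_Ioo ⟨hlow, h4⟩, abs_lt.mpr ⟨hlow, h4⟩⟩

lemma inv_half (a b c : ℝ) (hac : a < c) (hca : c - a < π)
    (hr : |b - (c - a) / 2| ≤ π / 2)
    (hE : Real.sin (c - (a + b) / 2) * Real.cos ((a + b) / 2)
        = Real.sin ((a + b) / 2) * Real.cos ((a - b) / 2)) :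
    (c - a) / 2 + Real.arcsin (Real.tan ((c - a) / 2) * Real.cos ((a + c) / 2)) = b := by
  have h := (res_iff a b c).1 hE
  have hq : 0 < Real.cos ((c - a) / 2) :=
    Real.cos_pos_of_mem_Ioo ⟨by linarith, by linarith⟩
  have : Real.tan ((c - a) / 2) * Real.cos ((a + c) / 2) = Real.sin (b - (c - a) / 2) := by
    rw [Real.tan_eq_sin_div_cos, div_mul_eq_mul_div, h]; field_simp
  rw [this, Real.arcsin_sin (abs_le.mp hr).1 (abs_le.mp hr).2]; ring

lemma fwd_half (a c : ℝ) (ha : 0 < a) (hac : a < c) (hc : c < π) (b : ℝ)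
    (hb : b = (c - a) / 2 + Real.arcsin (Real.tan ((c - a) / 2) * Real.cos ((a + c) / 2))) :
    0 < b ∧ a + b < π ∧ 0 < c - (a + b) / 2 ∧ c - (a + b) / 2 < π ∧
    Real.sin (c - (a + b) / 2) * Real.cos ((a + b) / 2)
        = Real.sin ((a + b) / 2) * Real.cos ((a - b) / 2) := by
  have hπ := Real.pi_pos
  set q := (c - a) / 2 with hqd
  set p := (a + c) / 2 with hpd
  have hq : 0 < Real.cos q := Real.cos_pos_of_mem_Ioo ⟨by linarith, by linarith⟩
  have hsq : 0 < Real.sin q := Real.sin_pos_of_pos_of_lt_pi (by linarith) (by linarith)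
  have htq : 0 < Real.tan q := by rw [Real.tan_eq_sin_div_cos]; positivity
  have h1 : Real.cos p < Real.cos q :=
    Real.cos_lt_cos_of_nonneg_of_le_pi (by linarith) (by linarith) (by linarith)
  have h2 : -Real.cos q < Real.cos p := by
    rw [← Real.cos_pi_sub]
    exact Real.cos_lt_cos_of_nonneg_of_le_pi (by linarith) (by linarith) (by linarith)
  set t := Real.tan q * Real.cos p with ht
  have htq' : Real.tan q * Real.cos q = Real.sin q := Real.tan_mul_cos hq.ne'
  have ht1 : t < Real.sin q := by rw [ht, ← htq']; exact mul_lt_mul_of_pos_left h1 htq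
  have ht2 : -Real.sin q < t := by
    rw [ht, ← htq', ← mul_neg]; exact mul_lt_mul_of_pos_left h2 htq
  have hs1 := Real.sin_le_one q
  have hsθ : Real.sin (Real.arcsin t) = t := Real.sin_arcsin (by linarith) (by linarith)
  have hθ1 : Real.arcsin t < q := by
    rw [Real.arcsin_lt_iff_lt_sin' ⟨by linarith, by linarith⟩]; exact ht1
  have hθ2 : -q < Real.arcsin t := by
    rw [Real.lt_arcsin_iff_sin_lt' ⟨by linarith, by linarith⟩, Real.sin_neg]; exact ht2
  have hab : a + b < π := by
    have e : a + b = p + Real.arcsin t := by rw [hb, hpd, hqd]; ring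
    rw [e]
    rcases le_or_gt p (π / 2) with h | h
    · linarith
    · have : Real.cos p < 0 := Real.cos_neg_of_pi_div_two_lt_of_lt h (by linarith)
      have : Real.arcsin t < 0 := by
        rw [Real.arcsin_lt_zero]; exact mul_neg_of_pos_of_neg htq this
      linarith
  have hb0 : 0 < b := by linarith
  have hE : Real.sin (c - (a + b) / 2) * Real.cos ((a + b) / 2)
        = Real.sin ((a + b) / 2) * Real.cos ((a - b) / 2) := by
    rw [res_iff]
    have : b - (c - a) / 2 = Real.arcsin t := by rw [hb]; ring
    rw [this, hsθ, ← hqd, ← hpd, ht, mul_right_comm, htq']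
  refine ⟨hb0, hab, ?_, by linarith, hE⟩
  have hcs : 0 < Real.cos ((a + b) / 2) := Real.cos_pos_of_mem_Ioo ⟨by linarith, by linarith⟩
  have hss : 0 < Real.sin ((a + b) / 2) :=
    Real.sin_pos_of_pos_of_lt_pi (by linarith) (by linarith)
  have hcd : 0 < Real.cos ((a - b) / 2) := Real.cos_pos_of_mem_Ioo ⟨by linarith, by linarith⟩
  by_contra hcon
  have : Real.sin (c - (a + b) / 2) ≤ 0 :=
    Real.sin_nonpos_of_nonpos_of_neg_pi_le (by linarith) (by linarith)
  have : 0 < Real.sin ((a + b) / 2) * Real.cos ((a - b) / 2) := by positivity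
  nlinarith

/-- strict monotonicity of `tan s cos d` in `b` -/
lemma T_mono (a b b' : ℝ) (ha : 0 < a) (hb : 0 < b) (hbb : b < b') (hab : a + b' < π) :
    Real.tan ((a + b) / 2) * Real.cos ((a - b) / 2)
      < Real.tan ((a + b') / 2) * Real.cos ((a - b') / 2) := by
  have hπ := Real.pi_pos
  have key : ∀ b, 0 < b → a + b < π → Real.tan ((a + b) / 2) * Real.cos ((a - b) / 2)
      = Real.sin ((b - a) / 2) + Real.sin a / Real.cos ((a + b) / 2) := by
    intro b hb hab
    have hcs : 0 < Real.cos ((a + b) / 2) := Real.cos_pos_of_mem_Ioo ⟨by linarith, by linarith⟩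
    rw [Real.tan_eq_sin_div_cos]
    field_simp
    rw [mul_comm (Real.cos ((a+b)/2)), sin_cos_half, sin_cos_half]
    have e3 : (a + b) / 2 + (a - b) / 2 = a := by ring
    have e4 : (a + b) / 2 - (a - b) / 2 = b := by ring
    have e5 : (b - a) / 2 + (a + b) / 2 = b := by ring
    have e6 : (b - a) / 2 - (a + b) / 2 = -a := by ring
    rw [e3, e4, e5, e6, Real.sin_neg]; ring
  rw [key b hb (by linarith), key b' (by linarith) hab]
  have h1 : Real.sin ((b - a) / 2) < Real.sin ((b' - a) / 2) :=
    Real.sin_lt_sin_of_lt_of_le_pi_div_two (by linarith) (by linarith) (by linarith)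
  have hsa : 0 < Real.sin a := Real.sin_pos_of_pos_of_lt_pi ha (by linarith)
  have hcs : 0 < Real.cos ((a + b') / 2) := Real.cos_pos_of_mem_Ioo ⟨by linarith, by linarith⟩
  have h2 : Real.cos ((a + b') / 2) < Real.cos ((a + b) / 2) :=
    Real.cos_lt_cos_of_nonneg_of_le_pi (by linarith) (by linarith) (by linarith)
  have : Real.sin a / Real.cos ((a + b) / 2) < Real.sin a / Real.cos ((a + b') / 2) :=
    div_lt_div_of_pos_left hsa hcs h2
  linarith

lemma Fm_id (x y : ℝ) : Fm x y = 4 * (Real.cos ((x / 2 + y / 2) / 2) ^ 2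
    - Real.sin ((x / 2 + y / 2) / 2) ^ 2 * Real.cos ((x / 2 - y / 2) / 2) ^ 2) := by
  have ex : x / 2 = (x / 2 + y / 2) / 2 + (x / 2 - y / 2) / 2 := by ring
  have ey : y / 2 = (x / 2 + y / 2) / 2 - (x / 2 - y / 2) / 2 := by ring
  unfold Fm
  generalize (x / 2 + y / 2) / 2 = s at *
  generalize (x / 2 - y / 2) / 2 = d at *
  rw [ex, ey, Real.cos_add, Real.cos_sub, Real.sin_add, Real.sin_sub]
  have h1 := Real.sin_sq_add_cos_sq s
  have h2 := Real.sin_sq_add_cos_sq d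
  rw [← sub_eq_zero]
  have h1' : Real.sin s ^ 2 = 1 - Real.cos s ^ 2 := by linarith
  have h2' : Real.sin d ^ 2 = 1 - Real.cos d ^ 2 := by linarith
  ring_nf
  simp only [h1', h2']
  ring

lemma Fp_id (x z : ℝ) : Fp x z = 4 * (Real.cos ((z / 2 - x / 2) / 2) ^ 2
    - Real.cos ((x / 2 + z / 2) / 2) ^ 2 * Real.sin ((z / 2 - x / 2) / 2) ^ 2) := by
  have ex : x / 2 = (x / 2 + z / 2) / 2 - (z / 2 - x / 2) / 2 := by ring
  have ey : z / 2 = (x / 2 + z / 2) / 2 + (z / 2 - x / 2) / 2 := by ring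
  unfold Fp
  generalize (x / 2 + z / 2) / 2 = s at *
  generalize (z / 2 - x / 2) / 2 = d at *
  rw [ex, ey, Real.cos_add, Real.cos_sub, Real.sin_add, Real.sin_sub]
  have h1 := Real.sin_sq_add_cos_sq s
  have h2 := Real.sin_sq_add_cos_sq d
  rw [← sub_eq_zero]
  have h1' : Real.sin s ^ 2 = 1 - Real.cos s ^ 2 := by linarith
  have h2' : Real.sin d ^ 2 = 1 - Real.cos d ^ 2 := by linarith
  ring_nf
  simp only [h1', h2']
  ring

def sv (x y : ℝ) : ℝ := (x / 2 + y / 2) / 2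
def dv (x y : ℝ) : ℝ := (x / 2 - y / 2) / 2
def TT (x y : ℝ) : ℝ := Real.tan (sv x y) * Real.cos (dv x y)
def SS (x : ℝ) : Set ℝ := {y | 0 < y ∧ x + y < 2 * π ∧ 0 < Fm x y}
def Ph1 (x y : ℝ) : ℝ := 2 * (sv x y + Real.arcsin (TT x y))
def Ph2 (x y : ℝ) : ℝ := 2 * (sv x y + (π - Real.arcsin (TT x y)))
def EE (x y : ℝ) : ℝ := Real.cos (dv x y) / Real.cos (sv x y) ^ 2 + Real.tan (sv x y) * Real.sin (dv x y)
def WT (x y : ℝ) : ℝ := √(1 - TT x y ^ 2)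

lemma cos_sv_pos {x y : ℝ} (hx : 0 < x) (hy : 0 < y) (hxy : x + y < 2 * π) :
    0 < Real.cos (sv x y) := by
  unfold sv
  exact Real.cos_pos_of_mem_Ioo ⟨by linarith [Real.pi_pos], by linarith⟩

lemma TT_pos {x y : ℝ} (hx : 0 < x) (hy : 0 < y) (hxy : x + y < 2 * π) : 0 < TT x y := by
  unfold TT sv dv
  have := Real.pi_pos
  exact mul_pos (Real.tan_pos_of_pos_of_lt_pi_div_two (by linarith) (by linarith))
    (Real.cos_pos_of_mem_Ioo ⟨by linarith, by linarith⟩)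

lemma Fm_TT {x y : ℝ} (hc : Real.cos (sv x y) ≠ 0) :
    Fm x y = 4 * Real.cos (sv x y) ^ 2 * (1 - TT x y ^ 2) := by
  rw [Fm_id, TT, Real.tan_eq_sin_div_cos]
  unfold sv dv at *
  generalize (x / 2 + y / 2) / 2 = s at *
  field_simp

lemma TT_lt_one_iff {x y : ℝ} (hx : 0 < x) (hy : 0 < y) (hxy : x + y < 2 * π) :
    0 < Fm x y ↔ TT x y < 1 := by
  have h1 := cos_sv_pos hx hy hxy
  have h2 := TT_pos hx hy hxy
  rw [Fm_TT h1.ne', mul_pos_iff_of_pos_left (by positivity)]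
  constructor <;> intro h <;> nlinarith

lemma sqrt_Fm {x y : ℝ} (hx : 0 < x) (hy : 0 < y) (hxy : x + y < 2 * π) :
    √(Fm x y) = 2 * Real.cos (sv x y) * WT x y := by
  have h1 := cos_sv_pos hx hy hxy
  rw [Fm_TT h1.ne', WT, Real.sqrt_mul (by positivity)]
  congr 1
  rw [show 4 * Real.cos (sv x y) ^ 2 = (2 * Real.cos (sv x y)) ^ 2 by ring,
    Real.sqrt_sq (by positivity)]

lemma h0_half (x z : ℝ) (hxz : x < z) : h0 x z = 2 * ((z / 2 - x / 2) / 2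
    + Real.arcsin (Real.tan ((z / 2 - x / 2) / 2) * Real.cos ((x / 2 + z / 2) / 2))) := by
  unfold h0
  rw [abs_of_pos (by linarith), show (z - x) / 4 = (z / 2 - x / 2) / 2 by ring,
    show (x + z) / 4 = (x / 2 + z / 2) / 2 by ring]
  ring

lemma branch (x y α : ℝ) (hx : 0 < x) (hx' : x < 2 * π) (hy : y ∈ SS x) (hα : 0 < α)
    (hα' : α < π) (hs : Real.sin α = TT x y) :
    x < 2 * (sv x y + α) ∧ 2 * (sv x y + α) < 2 * π ∧ h0 x (2 * (sv x y + α)) = y ∧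
      0 < Fp x (2 * (sv x y + α)) ∧
      √(Fp x (2 * (sv x y + α))) = |Real.cos (y / 2) + Real.cos (sv x y - α)| := by
  obtain ⟨hy0, hxy, -⟩ := hy
  have hcs := cos_sv_pos hx hy0 hxy
  have hE : Real.sin α * Real.cos ((x / 2 + y / 2) / 2)
      = Real.sin ((x / 2 + y / 2) / 2) * Real.cos ((x / 2 - y / 2) / 2) := by
    rw [hs, TT, Real.tan_eq_sin_div_cos]
    unfold sv dv at *
    generalize (x / 2 + y / 2) / 2 = s at *
    field_simp
  obtain ⟨h1, h2, h3, h4⟩ := core (x / 2) (y / 2) α (by linarith) (by linarith) (by linarith)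
    (by linarith) hα hα' hE
  have hxz : x < 2 * (sv x y + α) := by unfold sv; linarith
  set c := (x / 2 + y / 2) / 2 + α with hc
  have hz : 2 * (sv x y + α) = 2 * c := by rw [hc, sv]
  have hE' : Real.sin (c - (x / 2 + y / 2) / 2) * Real.cos ((x / 2 + y / 2) / 2)
      = Real.sin ((x / 2 + y / 2) / 2) * Real.cos ((x / 2 - y / 2) / 2) := by
    rw [← hE]; congr 2; rw [hc]; ring
  have hq : 0 < Real.cos ((c - x / 2) / 2) :=
    Real.cos_pos_of_mem_Ioo ⟨by linarith, by linarith⟩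
  have hFp : Fp x (2 * c) = (2 * Real.cos (y / 2 - (c - x / 2) / 2) * Real.cos ((c - x / 2) / 2)) ^ 2 := by
    rw [Fp_id, show 2 * c / 2 = c by ring]
    have hr := (res_iff (x / 2) (y / 2) c).1 hE'
    have h5 := Real.sin_sq_add_cos_sq (y / 2 - (c - x / 2) / 2)
    have : Real.cos ((x / 2 + c) / 2) ^ 2 * Real.sin ((c - x / 2) / 2) ^ 2
      = (1 - Real.cos (y / 2 - (c - x / 2) / 2) ^ 2) * Real.cos ((c - x / 2) / 2) ^ 2 := by
      rw [← mul_pow, mul_comm, hr, ← h5]; ring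
    rw [this]; ring
  refine ⟨hxz, by linarith, ?_, ?_, ?_⟩
  · rw [h0_half _ _ hxz, hz, show 2 * c / 2 = c by ring,
      inv_half (x / 2) (y / 2) c h1 (by linarith) h4.le hE']
    ring
  · rw [hz, hFp]; positivity
  · rw [hz, hFp, Real.sqrt_sq_eq_abs, mul_assoc, cos_cos_half]
    congr 1
    have e1 : y / 2 - (c - x / 2) / 2 + (c - x / 2) / 2 = y / 2 := by ring
    have e2 : y / 2 - (c - x / 2) / 2 - (c - x / 2) / 2 = sv x y - α := by rw [hc, sv]; ring
    rw [e1, e2]; ring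

lemma sv_hasDeriv (x y : ℝ) : HasDerivAt (sv x) (1 / 4) y := by
  have h : HasDerivAt (sv x) (1 / 2 / 2) y :=
    (((hasDerivAt_id' y).div_const 2).const_add (x / 2)).div_const 2
  exact h.congr_deriv (by norm_num)

lemma dv_hasDeriv (x y : ℝ) : HasDerivAt (dv x) (-1 / 4) y := by
  have h : HasDerivAt (dv x) (-(1 / 2) / 2) y :=
    (((hasDerivAt_id' y).div_const 2).const_sub (x / 2)).div_const 2
  exact h.congr_deriv (by norm_num)

lemma TT_hasDeriv {x y : ℝ} (hc : Real.cos (sv x y) ≠ 0) :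
    HasDerivAt (TT x) (EE x y / 4) y := by
  have h3 := (Real.hasDerivAt_tan hc).comp y (sv_hasDeriv x y)
  have h5 := h3.mul (dv_hasDeriv x y).cos
  have h6 : HasDerivAt (TT x) _ y := h5
  refine h6.congr_deriv ?_
  simp only [EE, Function.comp]
  ring

lemma arcsin_TT_hasDeriv {x y : ℝ} (hx : 0 < x) (hy : y ∈ SS x) :
    HasDerivAt (fun y => Real.arcsin (TT x y)) (EE x y / 4 / WT x y) y := by
  obtain ⟨hy0, hxy, hF⟩ := hy
  have h1 := TT_pos hx hy0 hxy
  have h2 := (TT_lt_one_iff hx hy0 hxy).1 hF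
  have h3 := Real.hasDerivAt_arcsin (x := TT x y) (by linarith) h2.ne
  have h4 : HasDerivAt (fun y => Real.arcsin (TT x y)) _ y :=
    h3.comp y (TT_hasDeriv (cos_sv_pos hx hy0 hxy).ne')
  refine h4.congr_deriv ?_
  rw [WT]; ring

lemma Ph1_hasDeriv {x y : ℝ} (hx : 0 < x) (hy : y ∈ SS x) :
    HasDerivAt (Ph1 x) (1 / 2 + EE x y / (2 * WT x y)) y := by
  have h : HasDerivAt (Ph1 x) _ y :=
    ((sv_hasDeriv x y).add (arcsin_TT_hasDeriv hx hy)).const_mul 2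
  exact h.congr_deriv (by ring)

lemma Ph2_hasDeriv {x y : ℝ} (hx : 0 < x) (hy : y ∈ SS x) :
    HasDerivAt (Ph2 x) (1 / 2 - EE x y / (2 * WT x y)) y := by
  have h : HasDerivAt (Ph2 x) _ y :=
    ((sv_hasDeriv x y).add ((arcsin_TT_hasDeriv hx hy).const_sub π)).const_mul 2
  exact h.congr_deriv (by ring)

lemma angle_facts {x y : ℝ} (hx : 0 < x) (hy : y ∈ SS x) :
    0 < Real.arcsin (TT x y) ∧ Real.arcsin (TT x y) < π / 2 ∧
      Real.sin (Real.arcsin (TT x y)) = TT x y ∧ 0 < WT x y := by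
  obtain ⟨hy0, hxy, hF⟩ := hy
  have h1 := TT_pos hx hy0 hxy
  have h2 := (TT_lt_one_iff hx hy0 hxy).1 hF
  refine ⟨Real.arcsin_pos.2 h1, Real.arcsin_lt_pi_div_two.2 h2,
    Real.sin_arcsin (by linarith) h2.le, Real.sqrt_pos.2 (by nlinarith)⟩

lemma jac (x y α e : ℝ) (hx : 0 < x) (hx' : x < 2 * π) (hy : y ∈ SS x) (hα : 0 < α)
    (hα' : α < π) (hs : Real.sin α = TT x y) (he : e ^ 2 = 1) (hc : Real.cos α = e * WT x y) :
    |1 / 2 + e * (EE x y / (2 * WT x y))| * (1 / √(Fp x (2 * (sv x y + α)))) = 1 / √(Fm x y) := by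
  obtain ⟨-, -, -, h4, h5⟩ := branch x y α hx hx' hy hα hα' hs
  obtain ⟨-, -, -, hw⟩ := angle_facts hx hy
  obtain ⟨hy0, hxy, hF⟩ := hy
  have hcs := cos_sv_pos hx hy0 hxy
  have hpos := Real.sqrt_pos.2 h4
  have hposm := Real.sqrt_pos.2 hF
  have : √(Fp x (2 * (sv x y + α))) = |1 / 2 + e * (EE x y / (2 * WT x y))| * √(Fm x y) := by
    have hm : Real.cos (y / 2) + Real.cos (sv x y - α)
        = e * ((1 / 2 + e * (EE x y / (2 * WT x y))) * (2 * Real.cos (sv x y) * WT x y)) := by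
      have ey : y / 2 = sv x y - dv x y := by unfold sv dv; ring
      have h7 : (1 / 2 + e * (EE x y / (2 * WT x y))) * (2 * Real.cos (sv x y) * WT x y)
          = Real.cos (sv x y) * WT x y + e * (EE x y * Real.cos (sv x y)) := by
        field_simp
      have h8 : EE x y * Real.cos (sv x y) = Real.cos (dv x y) * Real.cos (sv x y)
          + Real.sin (sv x y) * Real.sin (dv x y) + Real.sin (sv x y) * TT x y := by
        rw [EE, TT, Real.tan_eq_sin_div_cos]
        have h6 := Real.sin_sq_add_cos_sq (sv x y)
        field_simp
        linear_combination (-Real.cos (dv x y)) * h6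
      rw [h7, h8, ey, Real.cos_sub, Real.cos_sub, hs, hc]
      linear_combination (-(Real.cos (dv x y) * Real.cos (sv x y)
          + Real.sin (sv x y) * Real.sin (dv x y) + Real.sin (sv x y) * TT x y)) * he
    have habs : |e| = 1 := by
      exact (pow_eq_one_iff_of_nonneg (abs_nonneg e) two_ne_zero).1 (by rw [sq_abs, he])
    rw [h5, sqrt_Fm hx hy0 hxy, hm, abs_mul, habs, one_mul, abs_mul,
      abs_of_pos (show 0 < 2 * Real.cos (sv x y) * WT x y by positivity)]
  rw [mul_one_div, div_eq_div_iff hpos.ne' hposm.ne', this]; ring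
lemma bwd (x z : ℝ) (hx : 0 < x) (hxz : x < z) (hz : z < 2 * π) :
    0 < h0 x z ∧ x + h0 x z < 2 * π ∧ 0 < z / 2 - sv x (h0 x z) ∧ z / 2 - sv x (h0 x z) < π ∧
      Real.sin (z / 2 - sv x (h0 x z)) = TT x (h0 x z) := by
  have hh := h0_half x z hxz
  obtain ⟨h1, h2, h3, h4, h5⟩ := fwd_half (x / 2) (z / 2) (by linarith) (by linarith) (by linarith)
    (h0 x z / 2) (by rw [hh]; ring)
  have hy0 : 0 < h0 x z := by linarith
  have hxy : x + h0 x z < 2 * π := by linarith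
  have hcs := cos_sv_pos hx hy0 hxy
  refine ⟨hy0, hxy, h3, h4, ?_⟩
  rw [TT, Real.tan_eq_sin_div_cos, div_mul_eq_mul_div, eq_div_iff hcs.ne']
  exact h5

def A1 (x : ℝ) : Set ℝ := {z | z ∈ Ioo x (2 * π) ∧ 2 * z - x - h0 x z < 2 * π}
def A2 (x : ℝ) : Set ℝ := {z | z ∈ Ioo x (2 * π) ∧ 2 * π < 2 * z - x - h0 x z}
def A0 (x : ℝ) : Set ℝ := {z | z ∈ Ioo x (2 * π) ∧ 2 * z - x - h0 x z = 2 * π}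

lemma measurable_h0 : Measurable fun p : ℝ × ℝ => h0 p.1 p.2 := by
  unfold h0
  have : Measurable Real.tan := by
    have : Real.tan = fun x => Real.sin x / Real.cos x := by
      ext x; exact Real.tan_eq_sin_div_cos x
    rw [this]; fun_prop
  fun_prop

lemma measurable_Fm : Measurable fun p : ℝ × ℝ => Fm p.1 p.2 := by
  unfold Fm; fun_prop

lemma measurable_Fp : Measurable fun p : ℝ × ℝ => Fp p.1 p.2 := by
  unfold Fp; fun_prop

lemma measurable_h0' (x : ℝ) : Measurable (h0 x) :=
  measurable_h0.comp (measurable_prodMk_left (x := x))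

lemma measurable_Fm' (x : ℝ) : Measurable (Fm x) := by
  have h : Measurable fun y => Fm x y := by unfold Fm; fun_prop
  exact h

lemma meas_A2 (x : ℝ) : MeasurableSet (A2 x) := by
  have := measurable_h0' x
  have e : A2 x = Ioo x (2 * π) ∩ {z | 2 * π < 2 * z - x - h0 x z} := by ext; rfl
  have h2 : Measurable fun z => 2 * z - x - h0 x z := by fun_prop
  rw [e]
  exact measurableSet_Ioo.inter (measurableSet_lt measurable_const h2)

lemma meas_A0 (x : ℝ) : MeasurableSet (A0 x) := by
  have := measurable_h0' x
  have e : A0 x = Ioo x (2 * π) ∩ {z | 2 * z - x - h0 x z = 2 * π} := by ext; rfl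
  have h2 : Measurable fun z => 2 * z - x - h0 x z := by fun_prop
  rw [e]
  exact measurableSet_Ioo.inter (measurableSet_eq_fun h2 measurable_const)

lemma meas_SS (x : ℝ) : MeasurableSet (SS x) := by
  have := measurable_Fm' x
  have e : SS x = {y | 0 < y} ∩ ({y | x + y < 2 * π} ∩ {y | 0 < Fm x y}) := by ext; rfl
  have h2 : Measurable fun y : ℝ => x + y := by fun_prop
  rw [e]
  exact (measurableSet_lt measurable_const measurable_id).inter
    ((measurableSet_lt h2 measurable_const).inter (measurableSet_lt measurable_const this))

lemma Ph1_spec {x y : ℝ} (hx : 0 < x) (hx' : x < 2 * π) (hy : y ∈ SS x) :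
    x < Ph1 x y ∧ Ph1 x y < 2 * π ∧ h0 x (Ph1 x y) = y := by
  obtain ⟨h1, h2, h3, -⟩ := angle_facts hx hy
  obtain ⟨h4, h5, h6, -, -⟩ := branch x y _ hx hx' hy h1 (by linarith [Real.pi_pos]) h3
  exact ⟨h4, h5, h6⟩

lemma Ph2_spec {x y : ℝ} (hx : 0 < x) (hx' : x < 2 * π) (hy : y ∈ SS x) :
    x < Ph2 x y ∧ Ph2 x y < 2 * π ∧ h0 x (Ph2 x y) = y := by
  obtain ⟨h1, h2, h3, -⟩ := angle_facts hx hy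
  obtain ⟨h4, h5, h6, -, -⟩ := branch x y (π - Real.arcsin (TT x y)) hx hx' hy
    (by linarith) (by linarith) (by rw [Real.sin_pi_sub, h3])
  exact ⟨h4, h5, h6⟩

lemma image1 {x : ℝ} (hx : 0 < x) (hx' : x < 2 * π) : Ph1 x '' SS x = A1 x := by
  ext z
  constructor
  · rintro ⟨y, hy, rfl⟩
    obtain ⟨h1, h2, h3⟩ := Ph1_spec hx hx' hy
    obtain ⟨-, h5, -⟩ := angle_facts hx hy
    refine ⟨⟨h1, h2⟩, ?_⟩
    rw [h3, Ph1, sv]; linarith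
  · rintro ⟨⟨h1, h2⟩, h3⟩
    obtain ⟨k1, k2, k3, k4, k5⟩ := bwd x z hx h1 h2
    have h6 : z / 2 - sv x (h0 x z) < π / 2 := by rw [sv]; linarith
    have h7 : Real.arcsin (TT x (h0 x z)) = z / 2 - sv x (h0 x z) := by
      rw [← k5, Real.arcsin_sin (by linarith) h6.le]
    refine ⟨h0 x z, ⟨k1, k2, (TT_lt_one_iff hx k1 k2).2 ?_⟩, ?_⟩
    · rw [← Real.arcsin_lt_pi_div_two, h7]; exact h6
    · rw [Ph1, h7]; ring

lemma image2 {x : ℝ} (hx : 0 < x) (hx' : x < 2 * π) : Ph2 x '' SS x = A2 x := by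
  ext z
  constructor
  · rintro ⟨y, hy, rfl⟩
    obtain ⟨h1, h2, h3⟩ := Ph2_spec hx hx' hy
    obtain ⟨-, h5, -⟩ := angle_facts hx hy
    refine ⟨⟨h1, h2⟩, ?_⟩
    rw [h3, Ph2, sv]; linarith
  · rintro ⟨⟨h1, h2⟩, h3⟩
    obtain ⟨k1, k2, k3, k4, k5⟩ := bwd x z hx h1 h2
    have h6 : π / 2 < z / 2 - sv x (h0 x z) := by rw [sv]; linarith
    have h7 : Real.arcsin (TT x (h0 x z)) = π - (z / 2 - sv x (h0 x z)) := by
      rw [← k5, ← Real.sin_pi_sub, Real.arcsin_sin (by linarith) (by linarith)]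
    refine ⟨h0 x z, ⟨k1, k2, (TT_lt_one_iff hx k1 k2).2 ?_⟩, ?_⟩
    · rw [← Real.arcsin_lt_pi_div_two, h7]; linarith
    · rw [Ph2, h7]; ring

lemma null_A0 {x : ℝ} (hx : 0 < x) : volume (A0 x) = 0 := by
  apply Set.Subsingleton.measure_zero
  have key : ∀ z ∈ A0 x, 0 < h0 x z ∧ x + h0 x z < 2 * π ∧ TT x (h0 x z) = 1 := by
    rintro z ⟨⟨h1, h2⟩, h3⟩
    obtain ⟨k1, k2, k3, k4, k5⟩ := bwd x z hx h1 h2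
    refine ⟨k1, k2, ?_⟩
    rw [← k5, ← Real.sin_pi_div_two]
    congr 1
    rw [sv]; linarith
  have mono : ∀ y y', 0 < y → y < y' → x + y' < 2 * π → TT x y < TT x y' := by
    intro y y' h1 h2 h3
    exact T_mono (x / 2) (y / 2) (y' / 2) (by linarith) (by linarith) (by linarith) (by linarith)
  intro z hz z' hz'
  obtain ⟨a1, a2, a3⟩ := key z hz
  obtain ⟨b1, b2, b3⟩ := key z' hz'
  have h1 := hz.2
  have h2 := hz'.2
  rcases lt_trichotomy (h0 x z) (h0 x z') with h | h | h
  · have := mono _ _ a1 h b2; linarith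
  · linarith
  · have := mono _ _ b1 h a2; linarith

lemma int1 {x : ℝ} (hx : 0 < x) (hx' : x < 2 * π) (g : ℝ → ℝ≥0∞) :
    ∫⁻ z in A1 x, ENNReal.ofReal (1 / √(Fp x z)) * g (h0 x z)
      = ∫⁻ y in SS x, ENNReal.ofReal (1 / √(Fm x y)) * g y := by
  rw [← image1 hx hx', lintegral_image_eq_lintegral_abs_deriv_mul (meas_SS x)
    (fun y hy => (Ph1_hasDeriv hx hy).hasDerivWithinAt)]
  · refine setLIntegral_congr_fun (meas_SS x) fun y hy => ?_
    obtain ⟨h1, h2, h3, hw⟩ := angle_facts hx hy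
    have := jac x y (Real.arcsin (TT x y)) 1 hx hx' hy h1 (by linarith [Real.pi_pos]) h3
      (by norm_num) (by rw [Real.cos_arcsin, one_mul, WT])
    rw [(Ph1_spec hx hx' hy).2.2, ← mul_assoc, ← ENNReal.ofReal_mul (abs_nonneg _), ← this,
      one_mul, Ph1]
  · intro y hy y' hy' h
    rw [← (Ph1_spec hx hx' hy).2.2, h, (Ph1_spec hx hx' hy').2.2]

lemma int2 {x : ℝ} (hx : 0 < x) (hx' : x < 2 * π) (g : ℝ → ℝ≥0∞) :
    ∫⁻ z in A2 x, ENNReal.ofReal (1 / √(Fp x z)) * g (h0 x z)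
      = ∫⁻ y in SS x, ENNReal.ofReal (1 / √(Fm x y)) * g y := by
  rw [← image2 hx hx', lintegral_image_eq_lintegral_abs_deriv_mul (meas_SS x)
    (fun y hy => (Ph2_hasDeriv hx hy).hasDerivWithinAt)]
  · refine setLIntegral_congr_fun (meas_SS x) fun y hy => ?_
    obtain ⟨h1, h2, h3, hw⟩ := angle_facts hx hy
    have := jac x y (π - Real.arcsin (TT x y)) (-1) hx hx' hy (by linarith) (by linarith)
      (by rw [Real.sin_pi_sub, h3])
      (by norm_num) (by rw [Real.cos_pi_sub, Real.cos_arcsin, WT]; ring)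
    rw [(Ph2_spec hx hx' hy).2.2, ← mul_assoc, ← ENNReal.ofReal_mul (abs_nonneg _), ← this,
      Ph2, neg_one_mul, ← sub_eq_add_neg]
  · intro y hy y' hy' h
    rw [← (Ph2_spec hx hx' hy).2.2, h, (Ph2_spec hx hx' hy').2.2]

lemma half_int {x : ℝ} (hx : 0 < x) (hx' : x < 2 * π) (g : ℝ → ℝ≥0∞) :
    ∫⁻ z in Ioo x (2 * π), ENNReal.ofReal (1 / √(Fp x z)) * g (h0 x z)
      = 2 * ∫⁻ y in SS x, ENNReal.ofReal (1 / √(Fm x y)) * g y := by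
  have e : Ioo x (2 * π) = (A1 x ∪ A2 x) ∪ A0 x := by
    ext z
    simp only [A1, A2, A0, mem_union, mem_ofPred_eq]
    rcases lt_trichotomy (2 * z - x - h0 x z) (2 * π) with h | h | h <;> tauto
  have d1 : Disjoint (A1 x) (A2 x) := by
    rw [Set.disjoint_left]; rintro z ⟨-, h⟩ ⟨-, h'⟩; linarith
  have d2 : Disjoint (A1 x ∪ A2 x) (A0 x) := by
    rw [Set.disjoint_left]; rintro z (⟨-, h⟩ | ⟨-, h⟩) ⟨-, h'⟩ <;> linarith
  rw [e, lintegral_union (meas_A0 x) d2, lintegral_union (meas_A2 x) d1, int1 hx hx', int2 hx hx',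
    setLIntegral_measure_zero _ _ (null_A0 hx), add_zero, two_mul]

lemma h0_refl (x z : ℝ) : h0 x (2 * π - z) = - h0 (2 * π - x) z := by
  unfold h0
  rw [show 2 * π - z - x = -(z - (2 * π - x)) by ring, abs_neg,
    show (x + (2 * π - z)) / 4 = π - (2 * π - x + z) / 4 by ring, Real.cos_pi_sub, mul_neg,
    Real.arcsin_neg]
  ring

lemma Fp_refl (x z : ℝ) : Fp x (2 * π - z) = Fp (2 * π - x) z := by
  unfold Fp
  rw [show (2 * π - z) / 2 = π - z / 2 by ring, show (2 * π - x) / 2 = π - x / 2 by ring]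
  simp only [Real.cos_pi_sub, Real.sin_pi_sub]; ring

lemma Fm_refl (x z : ℝ) : Fm x (2 * π - z) = Fm (2 * π - x) z := by
  unfold Fm
  rw [show (2 * π - z) / 2 = π - z / 2 by ring, show (2 * π - x) / 2 = π - x / 2 by ring]
  simp only [Real.cos_pi_sub, Real.sin_pi_sub]; ring

lemma refl_int (s : Set ℝ) (f : ℝ → ℝ≥0∞) :
    ∫⁻ z in s, f z = ∫⁻ z in (fun z => 2 * π - z) ⁻¹' s, f (2 * π - z) :=
  ((Measure.measurePreserving_sub_left volume (2 * π)).setLIntegral_comp_preimage_emb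
    (MeasurableEquiv.subLeft (2 * π)).measurableEmbedding f s).symm

def SS' (x : ℝ) : Set ℝ := {y | y < 2 * π ∧ 2 * π < x + y ∧ 0 < Fm x y}

lemma meas_SS' (x : ℝ) : MeasurableSet (SS' x) := by
  have := measurable_Fm' x
  have e : SS' x = {y | y < 2 * π} ∩ ({y | 2 * π < x + y} ∩ {y | 0 < Fm x y}) := by ext; rfl
  have h2 : Measurable fun y : ℝ => x + y := by fun_prop
  rw [e]
  exact (measurableSet_lt measurable_id measurable_const).inter
    ((measurableSet_lt measurable_const h2).inter (measurableSet_lt measurable_const this))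

lemma half_int' {x : ℝ} (hx : 0 < x) (hx' : x < 2 * π) (g : ℝ → ℝ≥0∞)
    (hg : ∀ y, g (y + 2 * π) = g y) :
    ∫⁻ z in Ioo 0 x, ENNReal.ofReal (1 / √(Fp x z)) * g (h0 x z)
      = 2 * ∫⁻ y in SS' x, ENNReal.ofReal (1 / √(Fm x y)) * g y := by
  have e1 : (fun z => 2 * π - z) ⁻¹' (Ioo 0 x) = Ioo (2 * π - x) (2 * π) := by
    ext z; simp only [mem_preimage, mem_Ioo]; constructor <;> rintro ⟨h, h'⟩ <;> constructor <;> linarith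
  have e2 : (fun z => 2 * π - z) ⁻¹' (SS' x) = SS (2 * π - x) := by
    ext z; simp only [mem_preimage, SS, SS', mem_ofPred_eq, Fm_refl]
    constructor <;> rintro ⟨h, h', h''⟩ <;> refine ⟨?_, ?_, h''⟩ <;> linarith
  rw [refl_int, e1, refl_int (SS' x), e2]
  have := half_int (x := 2 * π - x) (by linarith) (by linarith) (fun y => g (-y))
  simp only [h0_refl, Fp_refl, Fm_refl]
  rw [this]
  congr 2
  ext y
  rw [← hg (-y), show -y + 2 * π = 2 * π - y by ring]

lemma full_int {x : ℝ} (hx : 0 < x) (hx' : x < 2 * π) (g : ℝ → ℝ≥0∞)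
    (hg : ∀ y, g (y + 2 * π) = g y) :
    ∫⁻ z in II, ENNReal.ofReal (1 / √(Fp x z)) * g (h0 x z)
      = ∫⁻ y in II, ENNReal.ofReal (2 * (if 0 < Fm x y then 1 / √(Fm x y) else 0)) * g y := by
  have hL : (Ioo 0 x ∪ Ioo x (2 * π) : Set ℝ) =ᵐ[volume] II := by
    have h1 : (Ioo 0 x ∪ Ioo x (2 * π) : Set ℝ) =ᵐ[volume] (Ico 0 x ∪ Ico x (2 * π) : Set ℝ) :=
      Ioo_ae_eq_Ico.union Ioo_ae_eq_Ico
    rwa [Ico_union_Ico_eq_Ico hx.le hx'.le] at h1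
  have d1 : Disjoint (Ioo 0 x) (Ioo x (2 * π)) := by
    rw [Set.disjoint_left]; rintro z ⟨-, h⟩ ⟨h', -⟩; linarith
  have d2 : Disjoint (SS' x) (SS x) := by
    rw [Set.disjoint_left]; rintro z ⟨-, h, -⟩ ⟨-, h', -⟩; linarith
  have hR : (II ∩ {y | 0 < Fm x y} : Set ℝ) =ᵐ[volume] (SS' x ∪ SS x : Set ℝ) := by
    have h1 : (II ∩ {y | 0 < Fm x y} : Set ℝ) =ᵐ[volume] (Ioo 0 (2 * π) ∩ {y | 0 < Fm x y} : Set ℝ) :=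
      (Ioo_ae_eq_Ico.symm).inter (ae_eq_refl _)
    refine h1.trans (Eq.eventuallyEq ?_)
    ext y
    constructor
    · rintro ⟨⟨h1, h2⟩, h3⟩
      have h3' : 0 < Fm x y := h3
      rcases lt_trichotomy (x + y) (2 * π) with h | h | h
      · exact Or.inr ⟨h1, h, h3⟩
      · exfalso
        rw [Fm_id, show (x / 2 + y / 2) / 2 = π / 2 by linarith, Real.cos_pi_div_two] at h3'
        nlinarith [sq_nonneg (Real.sin (π / 2) * Real.cos ((x / 2 - y / 2) / 2))]
      · exact Or.inl ⟨h2, h, h3⟩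
    · rintro (⟨h1, h2, h3⟩ | ⟨h1, h2, h3⟩)
      · exact ⟨⟨by linarith, h1⟩, h3⟩
      · exact ⟨⟨h1, by linarith⟩, h3⟩
  have hP : MeasurableSet {y | 0 < Fm x y} := measurableSet_lt measurable_const (measurable_Fm' x)
  have hI : ∀ y, ENNReal.ofReal (2 * (if 0 < Fm x y then 1 / √(Fm x y) else 0)) * g y
      = 2 * ({y | 0 < Fm x y}.indicator (fun y => ENNReal.ofReal (1 / √(Fm x y)) * g y) y) := by
    intro y
    by_cases h : 0 < Fm x y
    · rw [if_pos h, indicator_of_mem (by exact h), ENNReal.ofReal_mul (by norm_num), mul_assoc]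
      norm_num
    · rw [if_neg h, indicator_of_notMem (by exact h)]
      simp
  simp only [hI]
  rw [lintegral_const_mul' _ _ (by norm_num), lintegral_indicator hP, Measure.restrict_restrict hP,
    inter_comm, setLIntegral_congr hR, lintegral_union (meas_SS x) d2, ← setLIntegral_congr hL,
    lintegral_union measurableSet_Ioo d1, half_int hx hx', half_int' hx hx' g hg, mul_add]

lemma mod2pi_II {x : ℝ} (hx : x ∈ II) : mod2pi x = x := by
  obtain ⟨h1, h2⟩ := hx
  have : ⌊x / (2 * π)⌋ = 0 := by
    rw [Int.floor_eq_zero_iff]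
    exact ⟨by positivity, (div_lt_one (by positivity)).2 h2⟩
  rw [mod2pi, this]; simp

lemma meas_II : MeasurableSet II := measurableSet_Ico

lemma hFPU_II {x z : ℝ} (hx : x ∈ II) (hz : z ∈ II) : hFPU x z = h0 x z := by
  rw [hFPU, mod2pi_II hx, mod2pi_II hz]; simp

lemma measurable_hFPU : Measurable fun p : ℝ × ℝ => hFPU p.1 p.2 := by
  have hm : Measurable mod2pi := by
    unfold mod2pi
    have : Measurable fun x : ℝ => (⌊x / (2 * π)⌋ : ℝ) :=
      measurable_from_top.comp (Int.measurable_floor.comp (measurable_id.div_const _))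
    fun_prop
  unfold hFPU
  have : Measurable fun p : ℝ × ℝ => h0 (mod2pi p.1) (mod2pi p.2) :=
    measurable_h0.comp ((hm.comp measurable_fst).prodMk (hm.comp measurable_snd))
  have h2 : Measurable fun p : ℝ × ℝ => mod2pi p.1 := hm.comp measurable_fst
  fun_prop

def f1 (G : ℝ → ℝ → ℝ) (p : ℝ × ℝ) : ℝ := (1 / √(Fp p.1 p.2)) * G p.1 (hFPU p.1 p.2)
def f2 (G : ℝ → ℝ → ℝ) (p : ℝ × ℝ) : ℝ :=
  2 * (if 0 < Fm p.1 p.2 then 1 / √(Fm p.1 p.2) else 0) * G p.1 p.2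

lemma meas_f1 {G : ℝ → ℝ → ℝ} (hmeas : Measurable fun p : ℝ × ℝ => G p.1 p.2) :
    Measurable (f1 G) := by
  have h1 := measurable_Fp
  have h2 : Measurable fun p : ℝ × ℝ => G p.1 (hFPU p.1 p.2) :=
    hmeas.comp (measurable_fst.prodMk measurable_hFPU)
  exact (measurable_const.div (Real.continuous_sqrt.measurable.comp h1)).mul h2

lemma meas_f2 {G : ℝ → ℝ → ℝ} (hmeas : Measurable fun p : ℝ × ℝ => G p.1 p.2) :
    Measurable (f2 G) := by
  have h1 := measurable_Fm
  have h2 : Measurable fun p : ℝ × ℝ => if 0 < Fm p.1 p.2 then 1 / √(Fm p.1 p.2) else 0 :=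
    Measurable.ite (measurableSet_lt measurable_const h1) (by fun_prop) measurable_const
  unfold f2
  fun_prop

lemma main_lint (G : ℝ → ℝ → ℝ)
    (hmeas : Measurable fun p : ℝ × ℝ => G p.1 p.2)
    (hper2 : ∀ x y : ℝ, G x (y + 2 * π) = G x y) :
    ∫⁻ p in II ×ˢ II, ENNReal.ofReal (f1 G p) = ∫⁻ p in II ×ˢ II, ENNReal.ofReal (f2 G p) := by
  have hv : (volume : Measure (ℝ × ℝ)).restrict (II ×ˢ II)
      = (volume.restrict II).prod (volume.restrict II) := by
    rw [Measure.volume_eq_prod, Measure.prod_restrict]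
  rw [hv, lintegral_prod _ (meas_f1 hmeas).ennreal_ofReal.aemeasurable,
    lintegral_prod _ (meas_f2 hmeas).ennreal_ofReal.aemeasurable]
  have hII : ∀ f : ℝ → ℝ≥0∞, ∫⁻ x in II, f x = ∫⁻ x in Ioo 0 (2 * π), f x := fun f =>
    (setLIntegral_congr Ioo_ae_eq_Ico).symm
  refine (hII _).trans (Eq.trans ?_ (hII _).symm)
  refine setLIntegral_congr_fun measurableSet_Ioo fun x hx => ?_
  have hxI : x ∈ II := ⟨hx.1.le, hx.2⟩
  have := full_int hx.1 hx.2 (fun y => ENNReal.ofReal (G x y)) (fun y => by simp only [hper2])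
  calc _ = ∫⁻ z in II, ENNReal.ofReal (1 / √(Fp x z)) * ENNReal.ofReal (G x (h0 x z)) := by
        refine setLIntegral_congr_fun meas_II fun z hz => ?_
        simp only [f1]
        rw [hFPU_II hxI hz, ENNReal.ofReal_mul (by positivity)]
    _ = _ := this
    _ = _ := by
        refine setLIntegral_congr_fun meas_II fun z hz => ?_
        simp only [f2]
        exact (ENNReal.ofReal_mul (by split_ifs <;> positivity)).symm

lemma main_bochner (G : ℝ → ℝ → ℝ)
    (hmeas : Measurable fun p : ℝ × ℝ => G p.1 p.2)
    (hper2 : ∀ x y : ℝ, G x (y + 2 * π) = G x y) :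
    ∫ p in II ×ˢ II, f1 G p = ∫ p in II ×ˢ II, f2 G p := by
  have hp := main_lint G hmeas hper2
  have hn := main_lint (fun x y => - G x y) hmeas.neg (fun x y => by rw [hper2])
  have ha := main_lint (fun x y => |G x y|) (measurable_norm.comp hmeas)
    (fun x y => by rw [hper2])
  have n1 : ∀ p, f1 (fun x y => - G x y) p = - f1 G p := fun p => by simp only [f1]; ring
  have n2 : ∀ p, f2 (fun x y => - G x y) p = - f2 G p := fun p => by simp only [f2]; ring
  have a1 : ∀ p, ENNReal.ofReal (f1 (fun x y => |G x y|) p) = ‖f1 G p‖ₑ := fun p => by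
    rw [← ofReal_norm, Real.norm_eq_abs]
    simp only [f1]
    rw [abs_mul, abs_of_nonneg (a := 1 / √(Fp p.1 p.2)) (by positivity)]
  have a2 : ∀ p, ENNReal.ofReal (f2 (fun x y => |G x y|) p) = ‖f2 G p‖ₑ := fun p => by
    rw [← ofReal_norm, Real.norm_eq_abs]
    simp only [f2]
    rw [abs_mul, abs_of_nonneg (a := 2 * _) (by split_ifs <;> positivity)]
  simp only [n1, n2] at hn
  simp only [a1, a2] at ha
  by_cases hi : Integrable (f1 G) (volume.restrict (II ×ˢ II))
  · have hi2 : Integrable (f2 G) (volume.restrict (II ×ˢ II)) := by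
      refine ⟨(meas_f2 hmeas).aestronglyMeasurable, ?_⟩
      have := hi.2
      rw [HasFiniteIntegral] at this ⊢
      rwa [← ha]
    rw [integral_eq_lintegral_pos_part_sub_lintegral_neg_part hi,
      integral_eq_lintegral_pos_part_sub_lintegral_neg_part hi2, hp, hn]
  · have hi2 : ¬ Integrable (f2 G) (volume.restrict (II ×ˢ II)) := by
      intro h
      apply hi
      refine ⟨(meas_f1 hmeas).aestronglyMeasurable, ?_⟩
      have := h.2
      rw [HasFiniteIntegral] at this ⊢
      rwa [ha]
    rw [integral_undef hi, integral_undef hi2]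

/-- **Lemma 3.4 (change of variables `z ↦ y = h(x,z)`).**  For measurable, `2π`-periodic
`G : ℝ² → ℝ`,
`∫_{I²} G(x, h(x,z))/√(F₊(x,z)) dx dz = ∫_{I²} 2·𝟙(F₋(x,y) > 0) G(x,y)/√(F₋(x,y)) dx dy`,
in the sense of `[0,∞]`-valued integrals when `G ≥ 0`, and in the sense of Bochner integrals
as soon as one of the two integrals is absolutely convergent. -/
theorem change_of_variables_K2_to_K1
    (G : ℝ → ℝ → ℝ)
    (hmeas : Measurable fun p : ℝ × ℝ => G p.1 p.2)
    (hper1 : ∀ x y : ℝ, G (x + 2 * π) y = G x y)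
    (hper2 : ∀ x y : ℝ, G x (y + 2 * π) = G x y) :
    ((∀ x y : ℝ, 0 ≤ G x y) →
      ∫⁻ p in II ×ˢ II,
          ENNReal.ofReal ((1 / Real.sqrt (Fp p.1 p.2)) * G p.1 (hFPU p.1 p.2))
        = ∫⁻ p in II ×ˢ II,
            ENNReal.ofReal
              (2 * (if 0 < Fm p.1 p.2 then 1 / Real.sqrt (Fm p.1 p.2) else 0) * G p.1 p.2)) ∧
    ((IntegrableOn
          (fun p : ℝ × ℝ => (1 / Real.sqrt (Fp p.1 p.2)) * G p.1 (hFPU p.1 p.2))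
          (II ×ˢ II) ∨
        IntegrableOn
          (fun p : ℝ × ℝ =>
            2 * (if 0 < Fm p.1 p.2 then 1 / Real.sqrt (Fm p.1 p.2) else 0) * G p.1 p.2)
          (II ×ˢ II)) →
      ∫ p in II ×ˢ II, (1 / Real.sqrt (Fp p.1 p.2)) * G p.1 (hFPU p.1 p.2)
        = ∫ p in II ×ˢ II,
            2 * (if 0 < Fm p.1 p.2 then 1 / Real.sqrt (Fm p.1 p.2) else 0) * G p.1 p.2) := by
  exact ⟨fun _ => main_lint G hmeas hper2, fun _ => main_bochner G hmeas hper2⟩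
end
end
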